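/- Fix an integer d ≥ 4 and set β = d/2 − 2. For every real a > 0 there exist a constant c > 0 and an integer N such that for all n ≥ N: Var(f₀(Qₙ)) ≥ c·n^{1/(d−1) − a}, where Qₙ is the convex hull of n i.i.d. points with law μ_β and f₀(Qₙ) is its number of extreme points. -/

import Mathlib

open MeasureTheory

/-- The `β`-distribution on the closed unit disk of `ℝ²`. -/
noncomputable def betaMeasure (β : ℝ) : Measure (EuclideanSpace ℝ (Fin 2)) :=
  volume.withDensity fun x =>
    ENNReal.ofReal (if ‖x‖ ≤ 1 then (β + 1) / Real.pi * (1 - ‖x‖ ^ 2) ^ β else 0)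

instance (β : ℝ) : SigmaFinite (betaMeasure β) :=
  SigmaFinite.withDensity_ofReal _

/-- The joint law of `n` i.i.d. points with law `μ_β`, realized on `(ℝ²)ⁿ`. -/
noncomputable def betaPi (β : ℝ) (n : ℕ) :
    Measure (Fin n → EuclideanSpace ℝ (Fin 2)) :=
  Measure.pi fun _ => betaMeasure β

/-- The number of vertices (extreme points) of the convex hull `Qₙ`, as a real. -/
noncomputable def vertCount {n : ℕ} (ω : Fin n → EuclideanSpace ℝ (Fin 2)) : ℝ :=
  Nat.card (Set.extremePoints ℝ (convexHull ℝ (Set.range ω)))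

/-- `E[f₀(Qₙ)]`. -/
noncomputable def meanF0 (β : ℝ) (n : ℕ) : ℝ :=
  ∫ ω, vertCount ω ∂ betaPi β n

/-- `Var(f₀(Qₙ)) = E[f₀(Qₙ)²] - (E[f₀(Qₙ)])²`. -/
noncomputable def varF0 (β : ℝ) (n : ℕ) : ℝ :=
  (∫ ω, vertCount ω ^ 2 ∂ betaPi β n) - meanF0 β n ^ 2


set_option maxHeartbeats 2000000 in
lemma key_num (w lx ly rx ry zx zy x y a b : ℝ) (hw : 0 < w) (hw1 : w ≤ 1/100)
    (hlx : -(31/10) * w ≤ lx) (hlx' : lx ≤ -3 * w) (hly : 1 - (51/10) * w^2 ≤ ly) (hly' : ly ≤ 1 - (49/10) * w^2)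
    (hrx : 3 * w ≤ rx) (hrx' : rx ≤ (31/10) * w) (hry : 1 - (51/10) * w^2 ≤ ry) (hry' : ry ≤ 1 - (49/10) * w^2)
    (hzx : -(11/10) * w ≤ zx) (hzx' : zx ≤ (11/10) * w) (hzy : 1 - (11/10) * w^2 ≤ zy) (hzy' : zy ≤ 1)
    (hd : x^2 + y^2 ≤ 1) (hy : y < 1 - 100 * w^2)
    (hl : a * lx + b * ly < a * x + b * y) (hr : a * rx + b * ry < a * x + b * y) :
    a * zx + b * zy < a * x + b * y := by
  have hx1 : x^2 ≤ 2 * (1 - y) := by linarith [sq_nonneg (1 - y)]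
  -- depth
  have hY : 50 * w^2 + x^2/4 < 1 - y := by linarith
  obtain ⟨t, ht0, ht2, htx, htx'⟩ : ∃ t : ℝ, 0 ≤ t ∧ t^2 = x^2 ∧ x ≤ t ∧ -t ≤ x :=
    ⟨|x|, abs_nonneg x, sq_abs x, le_abs_self x, neg_abs_le x⟩
  have hw2 : 0 < w^2 := by positivity
  have hw3 : 0 < w^3 := by positivity
  have prod : ∀ u v U V : ℝ, |u| ≤ U → |v| ≤ V → |u * v| ≤ U * V := by
    intro u v U V hu hv
    rw [abs_mul]
    exact mul_le_mul hu hv (abs_nonneg v) ((abs_nonneg u).trans hu)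
  have hwt : w * (w * t) ≤ w * (w^2 + t^2) := by
    apply mul_le_mul_of_nonneg_left _ hw.le
    linarith [sq_nonneg (w - t), sq_nonneg w, sq_nonneg t]
  have hwt2 : 0 ≤ w * t^2 := by positivity
  have h1 : 0 < (rx - lx) * (ly - y) + (ry - ly) * (x - lx) := by
    have q1 := (abs_le.1 (prod (ry - ly) (x - lx) ((2/10) * w^2) (t + (31/10) * w)
      (abs_le.2 ⟨by linarith, by linarith⟩) (abs_le.2 ⟨by linarith, by linarith⟩))).1
    have q2 : (6 * w) * ((449/10) * w^2 + t^2/4) ≤ (rx - lx) * (ly - y) :=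
      mul_le_mul (by linarith) (by linarith) (by positivity) (by linarith)
    linarith
  have h3 : 0 < (x - zx) * (ry - zy) - (y - zy) * (rx - zx) := by
    have q1 := (abs_le.1 (prod (x - zx) (ry - zy) (t + (11/10) * w) ((51/10) * w^2)
      (abs_le.2 ⟨by linarith, by linarith⟩) (abs_le.2 ⟨by linarith, by linarith⟩))).1
    have q2 : ((19/10) * w) * ((489/10) * w^2 + t^2/4) ≤ (rx - zx) * (zy - y) :=
      mul_le_mul (by linarith) (by linarith) (by positivity) (by linarith)
    have hwt' : w * (w * t) ≤ w * (10 * w^2 + t^2/40) := by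
      apply mul_le_mul_of_nonneg_left _ hw.le
      linarith [sq_nonneg (20 * w - t)]
    linarith
  have h4 : 0 < -((x - zx) * (ly - zy) - (y - zy) * (lx - zx)) := by
    have q1 := (abs_le.1 (prod (x - zx) (ly - zy) (t + (11/10) * w) ((51/10) * w^2)
      (abs_le.2 ⟨by linarith, by linarith⟩) (abs_le.2 ⟨by linarith, by linarith⟩))).2
    have q2 : ((19/10) * w) * ((489/10) * w^2 + t^2/4) ≤ (zx - lx) * (zy - y) :=
      mul_le_mul (by linarith) (by linarith) (by positivity) (by linarith)
    have hwt' : w * (w * t) ≤ w * (10 * w^2 + t^2/40) := by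
      apply mul_le_mul_of_nonneg_left _ hw.le
      linarith [sq_nonneg (20 * w - t)]
    linarith
  by_contra hcon
  push Not at hcon
  set D1 := (rx - lx) * (ly - y) + (ry - ly) * (x - lx)
  set D3 := (x - zx) * (ry - zy) - (y - zy) * (rx - zx)
  set D4 := -((x - zx) * (ly - zy) - (y - zy) * (lx - zx))
  have e1 := mul_nonneg h1.le (sub_nonneg.2 hcon)
  have e3 := mul_pos h3 (sub_pos.2 hl)
  have e4 := mul_pos h4 (sub_pos.2 hr)
  have : D1 * (a * zx + b * zy - (a * x + b * y)) + D3 * (a * x + b * y - (a * lx + b * ly))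
    + D4 * (a * x + b * y - (a * rx + b * ry)) = 0 := by
    simp only [D1, D3, D4]; ring
  linarith

/-- exposing inequality for a point `p` near the top against far points -/
lemma far_num (w px py x y : ℝ) (hw : 0 < w) (hw1 : w ≤ 1/100)
    (h1 : -(31/10) * w ≤ px) (h2 : px ≤ (31/10) * w) (h3 : 1 - (51/10) * w^2 ≤ py) (h4 : py ≤ 1)
    (hp : 1 - (12/10) * w^2 ≤ px^2 + py^2)
    (hd : x^2 + y^2 ≤ 1) (hy : y < 1 - 100 * w^2) :
    px * x + py * y < px * px + py * py := by
  have hx1 : x^2 ≤ 2 * (1 - y) := by linarith [sq_nonneg (1 - y)]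
  have hY : 50 * w^2 + x^2/4 < 1 - y := by linarith
  have hpx : px^2 ≤ (961/100) * w^2 := by nlinarith
  have h5 : px * x ≤ (12/10) * px^2 + 2 * x^2 / 9 := by nlinarith [sq_nonneg (12 * px - 5 * x), sq_nonneg x]
  have h6 : (99/100) ≤ py := by nlinarith
  have h7 : py * y ≤ 1 - (99/100) * (1 - y) := by
    nlinarith [mul_nonneg (sub_nonneg.2 h6) (by nlinarith : 0 ≤ 1 - y)]
  nlinarith

lemma kill_num (w lx ly rx ry zx zy x y a b : ℝ) (hw : 0 < w)
    (hlx : -(31/10) * w ≤ lx) (hlx' : lx ≤ -3 * w) (hly : 1 - (51/10) * w^2 ≤ ly)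
    (hly' : ly ≤ 1 - (49/10) * w^2)
    (hrx : 3 * w ≤ rx) (hry : 1 - (51/10) * w^2 ≤ ry)
    (hry' : ry ≤ 1 - (49/10) * w^2)
    (hzx : 1 * w ≤ zx) (hzx' : zx ≤ (11/10) * w) (hzy : 1 - (7/10) * w^2 ≤ zy)
    (hx : 1 * w ≤ x) (hx' : x ≤ (11/10) * w) (hy : 1 - (11/10) * w^2 ≤ y) (hy' : y ≤ 1 - 1 * w^2)
    (hl : a * lx + b * ly < a * x + b * y) (hr : a * rx + b * ry < a * x + b * y)
    (hz : a * zx + b * zy < a * x + b * y) : False := by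
  have hw2 : 0 < w^2 := by positivity
  have hw3 : 0 < w^3 := by positivity
  have prod : ∀ u v U V : ℝ, |u| ≤ U → |v| ≤ V → |u * v| ≤ U * V := by
    intro u v U V hu hv
    rw [abs_mul]
    exact mul_le_mul hu hv (abs_nonneg v) ((abs_nonneg u).trans hu)
  have h1 : 0 < (lx - x) * (ry - y) - (ly - y) * (rx - x) := by
    have q1 : (4 * w) * ((38/10) * w^2) ≤ (x - lx) * (y - ry) :=
      mul_le_mul (by linarith) (by linarith) (by positivity) (by linarith)
    have q2 : 0 ≤ (y - ly) * (rx - x) := mul_nonneg (by linarith) (by linarith)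
    linarith
  have h2 : 0 < -((zx - x) * (ry - y) - (zy - y) * (rx - x)) := by
    have q1 := (abs_le.1 (prod (zx - x) (ry - y) ((1/10) * w) ((41/10) * w^2)
      (abs_le.2 ⟨by linarith, by linarith⟩) (abs_le.2 ⟨by linarith, by linarith⟩))).2
    have q2 : ((3/10) * w^2) * ((19/10) * w) ≤ (zy - y) * (rx - x) :=
      mul_le_mul (by linarith) (by linarith) (by positivity) (by linarith)
    linarith
  have h3 : 0 < (zx - x) * (ly - y) - (zy - y) * (lx - x) := by
    have q1 := (abs_le.1 (prod (zx - x) (ly - y) ((1/10) * w) ((41/10) * w^2)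
      (abs_le.2 ⟨by linarith, by linarith⟩) (abs_le.2 ⟨by linarith, by linarith⟩))).1
    have q2 : ((3/10) * w^2) * (4 * w) ≤ (zy - y) * (x - lx) :=
      mul_le_mul (by linarith) (by linarith) (by positivity) (by linarith)
    linarith
  have e1 := mul_pos h1 (sub_pos.2 hz)
  have e2 := mul_pos h2 (sub_pos.2 hl)
  have e3 := mul_pos h3 (sub_pos.2 hr)
  linarith

/-- exposing inequality for two horizontally separated points near the circle -/
lemma near_num (w px py x y : ℝ) (hw : 0 < w)
    (hp : 1 - (12/10) * w^2 ≤ px^2 + py^2) (hq : x^2 + y^2 ≤ 1)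
    (hx : (15/10) * w ≤ px - x ∨ (15/10) * w ≤ x - px) :
    px * x + py * y < px * px + py * py := by
  have hw2 : 0 < w^2 := by positivity
  have h1 : (225/100) * w^2 ≤ (px - x)^2 := by
    rcases hx with h | h
    · have := mul_le_mul h h (by positivity) (by linarith)
      linarith
    · have := mul_le_mul h h (by positivity) (by linarith)
      linarith
  linarith [sq_nonneg (py - y)]

lemma zk_num (w px py x y : ℝ) (hw : 0 < w) (hw1 : w ≤ 1/100)
    (h1 : 1 * w ≤ px) (h2 : px ≤ (11/10) * w) (h3 : 1 - (7/10) * w^2 ≤ py)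
    (hx : 1 * w ≤ x) (hx' : x ≤ (11/10) * w) (hy' : y ≤ 1 - 1 * w^2) :
    px * x + py * y < px * px + py * py := by
  have hw2 : 0 < w^2 := by positivity
  have hw4 : w^2 ≤ 1/100 := by
    have := mul_le_mul hw1 hw1 hw.le (by norm_num)
    linarith
  have q1 : px * (x - px) ≤ ((11/10) * w) * ((1/10) * w) := by
    by_cases h : 0 ≤ x - px
    · exact mul_le_mul h2 (by linarith) h (by linarith)
    · have : px * (x - px) ≤ 0 := mul_nonpos_of_nonneg_of_nonpos (by linarith) (by linarith)
      have : 0 ≤ ((11/10) * w) * ((1/10) * w) := by positivity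
      linarith
  have q2 : (9/10) * ((3/10) * w^2) ≤ py * (py - y) :=
    mul_le_mul (by linarith) (by linarith) (by positivity) (by linarith)
  linarith


abbrev E2 := EuclideanSpace ℝ (Fin 2)

abbrev VV (A : Set E2) : Set E2 := Set.extremePoints ℝ (convexHull ℝ A)

lemma mem_VV_iff {A : Set E2} (hA : A.Finite) {p : E2} (hp : p ∈ A) :
    p ∈ VV A ↔ p ∉ convexHull ℝ (A \ {p}) := by
  constructor
  · intro h hc
    have h1 : p ∈ VV (A \ {p}) :=
      inter_extremePoints_subset_extremePoints_of_subset
        (convexHull_mono Set.sdiff_subset) ⟨hc, h⟩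
    have := extremePoints_convexHull_subset h1
    exact this.2 rfl
  · intro h
    by_contra hc
    apply h
    have hsub : VV A ⊆ A \ {p} := fun q hq =>
      ⟨extremePoints_convexHull_subset hq, fun h' => hc (h' ▸ hq)⟩
    have hfin : (VV A).Finite := hA.subset (hsub.trans Set.sdiff_subset)
    have h1 := closure_convexHull_extremePoints (E := E2) (hA.isCompact_convexHull (𝕜 := ℝ))
      (convex_convexHull ℝ A)
    rw [(hfin.isClosed_convexHull (𝕜 := ℝ)).closure_eq] at h1
    have h2 : p ∈ convexHull ℝ (VV A) := by
      rw [h1]; exact subset_convexHull ℝ A hp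
    exact convexHull_mono hsub h2

lemma VV_of_lt {A : Set E2} (hA : A.Finite) {p : E2} (hp : p ∈ A) (a b : ℝ)
    (h : ∀ q ∈ A, q ≠ p → a * q 0 + b * q 1 < a * p 0 + b * p 1) : p ∈ VV A := by
  rw [mem_VV_iff hA hp]
  intro hc
  have hconv : Convex ℝ {q : E2 | a * q 0 + b * q 1 < a * p 0 + b * p 1} := by
    apply convex_halfSpace_lt (f := fun q : E2 => a * q 0 + b * q 1)
    constructor
    · intro x y; simp; ring
    · intro c x; simp; ring
  have : convexHull ℝ (A \ {p}) ⊆ {q : E2 | a * q 0 + b * q 1 < a * p 0 + b * p 1} :=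
    convexHull_min (fun q hq => h q hq.1 hq.2) hconv
  exact absurd (this hc) (lt_irrefl (a * p 0 + b * p 1))

lemma lt_of_VV {A : Set E2} (hA : A.Finite) {p : E2} (hp : p ∈ VV A) :
    ∃ a b : ℝ, ∀ q ∈ A, q ≠ p → a * q 0 + b * q 1 < a * p 0 + b * p 1 := by
  have hpA := extremePoints_convexHull_subset hp
  rw [mem_VV_iff hA hpA] at hp
  have hc : IsClosed (convexHull ℝ (A \ {p})) :=
    (hA.subset Set.sdiff_subset).isClosed_convexHull (𝕜 := ℝ)
  obtain ⟨f, u, h1, h2⟩ := geometric_hahn_banach_closed_point (convex_convexHull ℝ _) hc hp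
  have hf : ∀ q : E2, f q = f (EuclideanSpace.single 0 1) * q 0 + f (EuclideanSpace.single 1 1) * q 1 := by
    intro q
    have : q = q 0 • EuclideanSpace.single 0 (1:ℝ) + q 1 • EuclideanSpace.single 1 (1:ℝ) := by
      ext i; fin_cases i <;> simp
    conv_lhs => rw [this]
    rw [map_add, map_smul, map_smul, smul_eq_mul, smul_eq_mul]; ring
  refine ⟨f (EuclideanSpace.single 0 1), f (EuclideanSpace.single 1 1), fun q hq hqp => ?_⟩
  rw [← hf, ← hf]
  exact (h1 q (subset_convexHull ℝ _ ⟨hq, hqp⟩)).trans h2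

def box (u1 u2 v1 v2 w : ℝ) : Set E2 :=
  {q | u1 * w ≤ q 0 ∧ q 0 ≤ u2 * w ∧ 1 - v2 * w^2 ≤ q 1 ∧ q 1 ≤ 1 - v1 * w^2}

def cL (w : ℝ) := box (-(31/10)) (-3) (49/10) (51/10) w
def cR (w : ℝ) := box 3 (31/10) (49/10) (51/10) w
def cC (w : ℝ) := box 1 (11/10) 1 (11/10) w
def cP (w : ℝ) := box (-(11/10)) (-1) (65/100) (7/10) w
def cM (w : ℝ) := box 1 (11/10) (65/100) (7/10) w
def Out (w : ℝ) : Set E2 := {q | q 0 ^ 2 + q 1 ^ 2 ≤ 1 ∧ q 1 < 1 - 100 * w^2}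
def Cap (w : ℝ) : Set E2 := {q | q 0 ^ 2 + q 1 ^ 2 ≤ 1 ∧ 1 - 100 * w^2 ≤ q 1}

/-- bounds for a box -/
lemma box_norm {x y w m c1 c2 v1 v2 : ℝ} (hw : 0 < w) (hw1 : w ≤ 1/100)
    (h1 : m * w ≤ |x|) (h2 : |x| ≤ c1 * w) (h3 : 1 - v2 * w^2 ≤ y) (h4 : y ≤ 1 - v1 * w^2)
    (hm : 0 ≤ m) (hv1 : 0 ≤ v1) (hv2 : 0 ≤ v2) (hv6 : v2 ≤ 6)
    (ha : c1^2 - 2 * v1 + v1^2 / 10000 ≤ - c2) :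
    1 - (2 * v2 - m^2) * w^2 ≤ x^2 + y^2 ∧ x^2 + y^2 ≤ 1 - c2 * w^2 := by
  have hw2 : 0 < w^2 := by positivity
  have hw4 : w^2 ≤ 1/10000 := by
    have := mul_le_mul hw1 hw1 hw.le (by norm_num)
    linarith
  have e1 : m^2 * w^2 ≤ x^2 := by
    rw [← sq_abs x]
    have := mul_le_mul h1 h1 (by positivity) (abs_nonneg x)
    linarith
  have e2 : x^2 ≤ c1^2 * w^2 := by
    rw [← sq_abs x]
    have := mul_le_mul h2 h2 (abs_nonneg x) ((abs_nonneg x).trans h2)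
    linarith
  have hb : 0 ≤ 1 - v2 * w^2 := by
    have := mul_le_mul hv6 hw4 hw2.le (by norm_num)
    linarith
  have e3 : (1 - v2 * w^2) * (1 - v2 * w^2) ≤ y * y := mul_le_mul h3 h3 hb (hb.trans h3)
  have e4 : y * y ≤ (1 - v1 * w^2) * (1 - v1 * w^2) :=
    mul_le_mul h4 h4 (hb.trans h3) ((hb.trans h3).trans h4)
  constructor
  · have : 0 ≤ (v2 * w^2)^2 := sq_nonneg _
    linarith
  · have e5 := mul_le_mul_of_nonneg_right ha hw2.le
    have e6 : v1^2 * w^2 * w^2 ≤ v1^2 * w^2 * (1/10000) :=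
      mul_le_mul_of_nonneg_left hw4 (by positivity)
    linarith

lemma mem_box {u1 u2 v1 v2 w : ℝ} {q : E2} : q ∈ box u1 u2 v1 v2 w ↔
  u1 * w ≤ q 0 ∧ q 0 ≤ u2 * w ∧ 1 - v2 * w^2 ≤ q 1 ∧ q 1 ≤ 1 - v1 * w^2 := Iff.rfl


lemma cL_n {w : ℝ} (hw : 0 < w) (hw1 : w ≤ 1/100) {q : E2} (h : q ∈ cL w) : 1 - (12/10) * w^2 ≤ q 0^2 + q 1^2 ∧
    q 0^2 + q 1^2 ≤ 1 - (1/20) * w^2 := by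
  obtain ⟨h1, h2, h3, h4⟩ := h
  have ha : |q 0| = - q 0 := abs_of_nonpos (by linarith)
  have := box_norm (m := 3) (c1 := 31/10) (c2 := 1/20) hw hw1
    (by rw [ha]; linarith) (by rw [ha]; linarith) h3 h4 (by norm_num)
    (by norm_num) (by norm_num) (by norm_num) (by norm_num)
  refine ⟨le_trans (by linarith) this.1, this.2⟩

lemma cR_n {w : ℝ} (hw : 0 < w) (hw1 : w ≤ 1/100) {q : E2} (h : q ∈ cR w) : 1 - (12/10) * w^2 ≤ q 0^2 + q 1^2 ∧
    q 0^2 + q 1^2 ≤ 1 - (1/20) * w^2 := by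
  obtain ⟨h1, h2, h3, h4⟩ := h
  have ha : |q 0| = q 0 := abs_of_nonneg (by linarith)
  have := box_norm (m := 3) (c1 := 31/10) (c2 := 1/20) hw hw1
    (by rw [ha]; linarith) (by rw [ha]; linarith) h3 h4 (by norm_num)
    (by norm_num) (by norm_num) (by norm_num) (by norm_num)
  refine ⟨le_trans (by linarith) this.1, this.2⟩

lemma cC_n {w : ℝ} (hw : 0 < w) (hw1 : w ≤ 1/100) {q : E2} (h : q ∈ cC w) : 1 - (12/10) * w^2 ≤ q 0^2 + q 1^2 ∧
    q 0^2 + q 1^2 ≤ 1 - (1/20) * w^2 := by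
  obtain ⟨h1, h2, h3, h4⟩ := h
  have ha : |q 0| = q 0 := abs_of_nonneg (by linarith)
  have := box_norm (m := 1) (c1 := 11/10) (c2 := 1/20) hw hw1
    (by rw [ha]; linarith) (by rw [ha]; linarith) h3 h4 (by norm_num)
    (by norm_num) (by norm_num) (by norm_num) (by norm_num)
  refine ⟨le_trans (by linarith) this.1, this.2⟩

lemma cP_n {w : ℝ} (hw : 0 < w) (hw1 : w ≤ 1/100) {q : E2} (h : q ∈ cP w) : 1 - (12/10) * w^2 ≤ q 0^2 + q 1^2 ∧
    q 0^2 + q 1^2 ≤ 1 - (1/20) * w^2 := by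
  obtain ⟨h1, h2, h3, h4⟩ := h
  have ha : |q 0| = - q 0 := abs_of_nonpos (by linarith)
  have := box_norm (m := 1) (c1 := 11/10) (c2 := 1/20) hw hw1
    (by rw [ha]; linarith) (by rw [ha]; linarith) h3 h4 (by norm_num)
    (by norm_num) (by norm_num) (by norm_num) (by norm_num)
  refine ⟨le_trans (by linarith [sq_nonneg w]) this.1, this.2⟩

lemma cM_n {w : ℝ} (hw : 0 < w) (hw1 : w ≤ 1/100) {q : E2} (h : q ∈ cM w) : 1 - (12/10) * w^2 ≤ q 0^2 + q 1^2 ∧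
    q 0^2 + q 1^2 ≤ 1 - (1/20) * w^2 := by
  obtain ⟨h1, h2, h3, h4⟩ := h
  have ha : |q 0| = q 0 := abs_of_nonneg (by linarith)
  have := box_norm (m := 1) (c1 := 11/10) (c2 := 1/20) hw hw1
    (by rw [ha]; linarith) (by rw [ha]; linarith) h3 h4 (by norm_num)
    (by norm_num) (by norm_num) (by norm_num) (by norm_num)
  refine ⟨le_trans (by linarith [sq_nonneg w]) this.1, this.2⟩


lemma far_iff {w : ℝ} (hw : 0 < w) (hw1 : w ≤ 1/100) {P : Set E2} (hP : P.Finite) (hPo : P ⊆ Out w)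
    {l r k z p : E2} (hl : l ∈ cL w) (hr : r ∈ cR w) (hk : k ∈ cC w) (hz : z ∈ cP w ∪ cM w)
    (hp : p ∈ P) : p ∈ VV (P ∪ {l, r, k, z}) ↔ p ∈ VV (P ∪ {l, r}) := by
  constructor
  · intro h
    refine inter_extremePoints_subset_extremePoints_of_subset
        (convexHull_mono ?_) ⟨subset_convexHull ℝ _ (Or.inl hp), h⟩
    apply Set.union_subset_union_right
    intro x hx
    simp only [Set.mem_insert_iff, Set.mem_singleton_iff] at hx ⊢
    tauto
  · intro h
    obtain ⟨a, b, hab⟩ := lt_of_VV (hP.union (Set.toFinite _)) h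
    have hpo := hPo hp
    have hw2 : 0 < w^2 := by positivity
    have hpl : l ≠ p := by
      rintro rfl
      linarith [hl.2.2.1, hpo.2]
    have hpr : r ≠ p := by
      rintro rfl
      linarith [hr.2.2.1, hpo.2]
    have hl' := hab l (by simp) hpl
    have hr' := hab r (by simp) hpr
    have key : ∀ y : E2, -(11/10) * w ≤ y 0 → y 0 ≤ (11/10) * w → 1 - (11/10) * w^2 ≤ y 1 → y 1 ≤ 1 →
        a * y 0 + b * y 1 < a * p 0 + b * p 1 := by
      intro y h1 h2 h3 h4
      exact key_num w (l 0) (l 1) (r 0) (r 1) (y 0) (y 1) (p 0) (p 1) a b hw hw1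
        hl.1 hl.2.1 hl.2.2.1 hl.2.2.2 hr.1 hr.2.1 hr.2.2.1 hr.2.2.2 h1 h2 h3 h4 hpo.1 hpo.2 hl' hr'
    refine VV_of_lt (hP.union (Set.toFinite _)) (Or.inl hp) a b ?_
    rintro q (hq | hq) hqp
    · exact hab q (Or.inl hq) hqp
    · simp only [Set.mem_insert_iff, Set.mem_singleton_iff] at hq
      rcases hq with rfl | rfl | rfl | rfl
      · exact hl'
      · exact hr'
      · obtain ⟨h1, h2, h3, h4⟩ := hk
        exact key q (by linarith) (by linarith) (by linarith) (by linarith)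
      · rcases hz with hz | hz
        · obtain ⟨h1, h2, h3, h4⟩ := hz
          exact key q (by linarith) (by linarith) (by linarith) (by linarith)
        · obtain ⟨h1, h2, h3, h4⟩ := hz
          exact key q (by linarith) (by linarith) (by linarith) (by linarith)

lemma expose {w : ℝ} (hw : 0 < w) (hw1 : w ≤ 1/100) {P Q : Set E2} (hP : P.Finite) (hQ : Q.Finite)
    (hPo : P ⊆ Out w)
    {p : E2} (hp : p ∈ Q)
    (h1 : -(31/10) * w ≤ p 0) (h2 : p 0 ≤ (31/10) * w) (h3 : 1 - (51/10) * w^2 ≤ p 1) (h4 : p 1 ≤ 1)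
    (h5 : 1 - (12/10) * w^2 ≤ p 0^2 + p 1^2)
    (hq : ∀ q ∈ Q, q ≠ p → p 0 * q 0 + p 1 * q 1 < p 0 * p 0 + p 1 * p 1) : p ∈ VV (P ∪ Q) := by
  refine VV_of_lt (hP.union hQ) (Or.inr hp) (p 0) (p 1) ?_
  rintro q (hqP | hqQ) hqp
  · exact far_num w (p 0) (p 1) (q 0) (q 1) hw hw1 h1 h2 h3 h4 h5 (hPo hqP).1 (hPo hqP).2
  · exact hq q hqQ hqp

lemma VV_plus {w : ℝ} (hw : 0 < w) (hw1 : w ≤ 1/100) {P : Set E2} (hP : P.Finite) (hPo : P ⊆ Out w)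
    {l r k z : E2} (hl : l ∈ cL w) (hr : r ∈ cR w) (hk : k ∈ cC w) (hz : z ∈ cP w) :
    VV (P ∪ {l, r, k, z}) = (P ∩ VV (P ∪ {l, r})) ∪ {l, r, k, z} := by
  have hw2 : 0 < w^2 := by positivity
  have nl := cL_n hw hw1 hl
  have nr := cR_n hw hw1 hr
  have nk := cC_n hw hw1 hk
  have nz := cP_n hw hw1 hz
  have fin : ({l, r, k, z} : Set E2).Finite := Set.toFinite _
  have ll := hl
  have rr := hr
  have kk := hk
  have zz := hz
  obtain ⟨l1, l2, l3, l4⟩ := hl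
  obtain ⟨r1, r2, r3, r4⟩ := hr
  obtain ⟨k1, k2, k3, k4⟩ := hk
  obtain ⟨z1, z2, z3, z4⟩ := hz
  apply Set.Subset.antisymm
  · intro q hq
    have hq1 := extremePoints_convexHull_subset hq
    rcases hq1 with h | h
    · exact Or.inl ⟨h, (far_iff hw hw1 hP hPo ll rr kk (Or.inl zz) h).1 hq⟩
    · exact Or.inr h
  · rintro q (h | h)
    · exact (far_iff hw hw1 hP hPo ll rr kk (Or.inl zz) h.1).2 h.2
    · have near : ∀ p ∈ ({l, r, k, z} : Set E2), ∀ q ∈ ({l, r, k, z} : Set E2), q ≠ p →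
          (15/10) * w ≤ p 0 - q 0 ∨ (15/10) * w ≤ q 0 - p 0 := by
        intro p hp q hq hqp
        simp only [Set.mem_insert_iff, Set.mem_singleton_iff] at hp hq
        rcases hp with rfl | rfl | rfl | rfl
        · rcases hq with rfl | rfl | rfl | rfl
          · exact absurd rfl hqp
          · exact Or.inr (by linarith only [hw, l2, r1])
          · exact Or.inr (by linarith only [hw, l2, k1])
          · exact Or.inr (by linarith only [hw, l2, z1])
        · rcases hq with rfl | rfl | rfl | rfl
          · exact Or.inl (by linarith only [hw, r1, l2])
          · exact absurd rfl hqp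
          · exact Or.inl (by linarith only [hw, r1, k2])
          · exact Or.inl (by linarith only [hw, r1, z2])
        · rcases hq with rfl | rfl | rfl | rfl
          · exact Or.inl (by linarith only [hw, k1, l2])
          · exact Or.inr (by linarith only [hw, k2, r1])
          · exact absurd rfl hqp
          · exact Or.inl (by linarith only [hw, k1, z2])
        · rcases hq with rfl | rfl | rfl | rfl
          · exact Or.inl (by linarith only [hw, z1, l2])
          · exact Or.inr (by linarith only [hw, z2, r1])
          · exact Or.inr (by linarith only [hw, z2, k1])
          · exact absurd rfl hqp
      have nn : ∀ p ∈ ({l, r, k, z} : Set E2), 1 - (12/10) * w^2 ≤ p 0^2 + p 1^2 ∧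
          p 0^2 + p 1^2 ≤ 1 - (1/20) * w^2 := by
        intro p hp
        simp only [Set.mem_insert_iff, Set.mem_singleton_iff] at hp
        rcases hp with rfl | rfl | rfl | rfl <;> assumption
      have bb : -(31/10) * w ≤ q 0 ∧ q 0 ≤ (31/10) * w ∧ 1 - (51/10) * w^2 ≤ q 1 ∧ q 1 ≤ 1 := by
        simp only [Set.mem_insert_iff, Set.mem_singleton_iff] at h
        rcases h with rfl | rfl | rfl | rfl
        · exact ⟨by linarith only [hw, l1], by linarith only [hw, l2], by linarith only [hw2, l3], by linarith only [hw2, l4]⟩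
        · exact ⟨by linarith only [hw, r1], by linarith only [hw, r2], by linarith only [hw2, r3], by linarith only [hw2, r4]⟩
        · exact ⟨by linarith only [hw, k1], by linarith only [hw, k2], by linarith only [hw2, k3], by linarith only [hw2, k4]⟩
        · exact ⟨by linarith only [hw, z1], by linarith only [hw, z2], by linarith only [hw2, z3], by linarith only [hw2, z4]⟩
      refine expose hw hw1 hP fin hPo h bb.1 bb.2.1 bb.2.2.1 bb.2.2.2 (nn q h).1 ?_
      intro q' hq' hne
      exact near_num w _ _ _ _ hw (nn q h).1 (by linarith [(nn q' hq').2]) (near q h q' hq' hne)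

lemma VV_minus {w : ℝ} (hw : 0 < w) (hw1 : w ≤ 1/100) {P : Set E2} (hP : P.Finite) (hPo : P ⊆ Out w)
    {l r k z : E2} (hl : l ∈ cL w) (hr : r ∈ cR w) (hk : k ∈ cC w) (hz : z ∈ cM w) :
    VV (P ∪ {l, r, k, z}) = (P ∩ VV (P ∪ {l, r})) ∪ {l, r, z} := by
  have hw2 : 0 < w^2 := by positivity
  have nl := cL_n hw hw1 hl
  have nr := cR_n hw hw1 hr
  have nk := cC_n hw hw1 hk
  have nz := cM_n hw hw1 hz
  have fin : ({l, r, k, z} : Set E2).Finite := Set.toFinite _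
  have ll := hl
  have rr := hr
  have kk := hk
  have zz := hz
  obtain ⟨l1, l2, l3, l4⟩ := hl
  obtain ⟨r1, r2, r3, r4⟩ := hr
  obtain ⟨k1, k2, k3, k4⟩ := hk
  obtain ⟨z1, z2, z3, z4⟩ := hz
  have ml : l 0^2 + l 1^2 ≤ 1 := by linarith only [nl.2, hw2]
  have mr : r 0^2 + r 1^2 ≤ 1 := by linarith only [nr.2, hw2]
  have mk : k 0^2 + k 1^2 ≤ 1 := by linarith only [nk.2, hw2]
  have mz : z 0^2 + z 1^2 ≤ 1 := by linarith only [nz.2, hw2]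
  have hkl : l ≠ k := by rintro rfl; linarith only [hw, l2, k1]
  have hkr : r ≠ k := by rintro rfl; linarith only [hw, r1, k2]
  have hkz : z ≠ k := by rintro rfl; linarith only [hw2, z3, k4]
  apply Set.Subset.antisymm
  · intro q hq
    have hq1 := extremePoints_convexHull_subset hq
    rcases hq1 with h | h
    · exact Or.inl ⟨h, (far_iff hw hw1 hP hPo ll rr kk (Or.inr zz) h).1 hq⟩
    · right
      have hqk : q ≠ k := by
        rintro rfl
        obtain ⟨a, b, hab⟩ := lt_of_VV (hP.union fin) hq
        exact kill_num w (l 0) (l 1) (r 0) (r 1) (z 0) (z 1) (q 0) (q 1) a b hw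
          l1 l2 l3 l4 r1 r3 r4 z1 z2 z3 k1 k2 k3 k4 (hab l (by simp) hkl)
          (hab r (by simp) hkr) (hab z (by simp) hkz)
      simp only [Set.mem_insert_iff, Set.mem_singleton_iff] at h ⊢
      tauto
  · rintro q (h | h)
    · exact (far_iff hw hw1 hP hPo ll rr kk (Or.inr zz) h.1).2 h.2
    · have near : ∀ p ∈ ({l, r, z} : Set E2), ∀ q ∈ ({l, r, k, z} : Set E2), q ≠ p →
          p 0 * q 0 + p 1 * q 1 < p 0 * p 0 + p 1 * p 1 := by
        intro p hp q hq hqp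
        simp only [Set.mem_insert_iff, Set.mem_singleton_iff] at hp hq
        rcases hp with rfl | rfl | rfl
        · rcases hq with rfl | rfl | rfl | rfl
          · exact absurd rfl hqp
          · exact near_num w _ _ _ _ hw nl.1 mr (Or.inr (by linarith only [hw, l2, r1]))
          · exact near_num w _ _ _ _ hw nl.1 mk (Or.inr (by linarith only [hw, l2, k1]))
          · exact near_num w _ _ _ _ hw nl.1 mz (Or.inr (by linarith only [hw, l2, z1]))
        · rcases hq with rfl | rfl | rfl | rfl
          · exact near_num w _ _ _ _ hw nr.1 ml (Or.inl (by linarith only [hw, r1, l2]))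
          · exact absurd rfl hqp
          · exact near_num w _ _ _ _ hw nr.1 mk (Or.inl (by linarith only [hw, r1, k2]))
          · exact near_num w _ _ _ _ hw nr.1 mz (Or.inl (by linarith only [hw, r1, z2]))
        · rcases hq with rfl | rfl | rfl | rfl
          · exact near_num w _ _ _ _ hw nz.1 ml (Or.inl (by linarith only [hw, z1, l2]))
          · exact near_num w _ _ _ _ hw nz.1 mr (Or.inr (by linarith only [hw, z2, r1]))
          · exact zk_num w _ _ _ _ hw hw1 z1 z2 z3 k1 k2 k4
          · exact absurd rfl hqp
      have nn : 1 - (12/10) * w^2 ≤ q 0^2 + q 1^2 := by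
        simp only [Set.mem_insert_iff, Set.mem_singleton_iff] at h
        rcases h with rfl | rfl | rfl
        · exact nl.1
        · exact nr.1
        · exact nz.1
      have bb : -(31/10) * w ≤ q 0 ∧ q 0 ≤ (31/10) * w ∧ 1 - (51/10) * w^2 ≤ q 1 ∧ q 1 ≤ 1 := by
        simp only [Set.mem_insert_iff, Set.mem_singleton_iff] at h
        rcases h with rfl | rfl | rfl
        · exact ⟨by linarith only [hw, l1], by linarith only [hw, l2], by linarith only [hw2, l3], by linarith only [hw2, l4]⟩
        · exact ⟨by linarith only [hw, r1], by linarith only [hw, r2], by linarith only [hw2, r3], by linarith only [hw2, r4]⟩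
        · exact ⟨by linarith only [hw, z1], by linarith only [hw, z2], by linarith only [hw2, z3], by linarith only [hw2, z4]⟩
      refine expose hw hw1 hP fin hPo (p := q) ?_ bb.1 bb.2.1 bb.2.2.1 bb.2.2.2 nn (near q h)
      simp only [Set.mem_insert_iff, Set.mem_singleton_iff] at h ⊢
      tauto

lemma card_diff {w : ℝ} (hw : 0 < w) (hw1 : w ≤ 1/100) {P : Set E2} (hP : P.Finite) (hPo : P ⊆ Out w)
    {l r k z z' : E2} (hl : l ∈ cL w) (hr : r ∈ cR w) (hk : k ∈ cC w) (hz : z ∈ cP w)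
    (hz' : z' ∈ cM w) :
    Nat.card (VV (P ∪ {l, r, k, z})) = Nat.card (VV (P ∪ {l, r, k, z'})) + 1 := by
  rw [VV_plus hw hw1 hP hPo hl hr hk hz, VV_minus hw hw1 hP hPo hl hr hk hz',
    Nat.card_coe_set_eq, Nat.card_coe_set_eq]
  have hw2 : 0 < w^2 := by positivity
  have hnot : ∀ q ∈ P, q 1 < 1 - 100 * w^2 := fun q hq => (hPo hq).2
  obtain ⟨l1, l2, l3, l4⟩ := hl
  obtain ⟨r1, r2, r3, r4⟩ := hr
  obtain ⟨k1, k2, k3, k4⟩ := hk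
  obtain ⟨z1, z2, z3, z4⟩ := hz
  obtain ⟨y1, y2, y3, y4⟩ := hz'
  have hfin : (P ∩ VV (P ∪ {l, r})).Finite := hP.subset Set.inter_subset_left
  have a1 : l ≠ r := by rintro rfl; linarith only [hw, l2, r1]
  have a2 : l ≠ k := by rintro rfl; linarith only [hw, l2, k1]
  have a3 : l ≠ z := by rintro rfl; linarith only [hw, l2, z1]
  have a4 : r ≠ k := by rintro rfl; linarith only [hw, r1, k2]
  have a5 : r ≠ z := by rintro rfl; linarith only [hw, r1, z2]
  have a6 : k ≠ z := by rintro rfl; linarith only [hw, k1, z2]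
  have a7 : l ≠ z' := by rintro rfl; linarith only [hw, l2, y1]
  have a8 : r ≠ z' := by rintro rfl; linarith only [hw, r1, y2]
  have bl : l ∉ P := fun h => by linarith only [hnot _ h, hw2, l3]
  have br : r ∉ P := fun h => by linarith only [hnot _ h, hw2, r3]
  have bk : k ∉ P := fun h => by linarith only [hnot _ h, hw2, k3]
  have bz : z ∉ P := fun h => by linarith only [hnot _ h, hw2, z3]
  have by' : z' ∉ P := fun h => by linarith only [hnot _ h, hw2, y3]
  rw [Set.ncard_union_eq _ hfin (Set.toFinite _), Set.ncard_union_eq _ hfin (Set.toFinite _)]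
  · have e1 : ({l, r, k, z} : Set E2).ncard = 4 := by
      rw [Set.ncard_insert_of_notMem (by simp [*]), Set.ncard_insert_of_notMem (by simp [*]),
        Set.ncard_pair a6]
    have e2 : ({l, r, z'} : Set E2).ncard = 3 := by
      rw [Set.ncard_insert_of_notMem (by simp [*]), Set.ncard_pair a8]
    rw [e1, e2]
  · rw [Set.disjoint_left]
    intro q hq hq'
    simp only [Set.mem_insert_iff, Set.mem_singleton_iff] at hq'
    rcases hq' with rfl | rfl | rfl <;> exact absurd hq.1 (by assumption)
  · rw [Set.disjoint_left]
    intro q hq hq'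
    simp only [Set.mem_insert_iff, Set.mem_singleton_iff] at hq'
    rcases hq' with rfl | rfl | rfl | rfl <;> exact absurd hq.1 (by assumption)


noncomputable def dens (β : ℝ) (x : E2) : ℝ :=
  if ‖x‖ ≤ 1 then (β + 1) / Real.pi * (1 - ‖x‖ ^ 2) ^ β else 0

lemma dens_meas (β : ℝ) : Measurable (dens β) := by
  unfold dens
  apply Measurable.ite
  · exact measurableSet_le measurable_norm measurable_const
  · fun_prop
  · fun_prop

lemma betaMeasure_eq (β : ℝ) : betaMeasure β = volume.withDensity fun x => ENNReal.ofReal (dens β x) := rfl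

lemma dens_nonneg {β : ℝ} (hβ : 0 ≤ β) (x : E2) : 0 ≤ dens β x := by
  unfold dens
  split_ifs with h
  · have : 0 ≤ 1 - ‖x‖^2 := by nlinarith [norm_nonneg x]
    positivity
  · rfl

lemma dens_le {β : ℝ} (hβ : 0 ≤ β) (x : E2) : dens β x ≤ (β + 1) / Real.pi := by
  unfold dens
  split_ifs with h
  · have h1 : 0 ≤ 1 - ‖x‖^2 := by nlinarith [norm_nonneg x]
    have := Real.rpow_le_one h1 (by nlinarith [norm_nonneg x]) hβ
    exact mul_le_of_le_one_right (by positivity) this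
  · positivity

lemma beta_mass {β : ℝ} (hβ : 0 ≤ β) : ∫ x : E2, dens β x = 1 := by
  have h := integral_fun_norm_addHaar (volume : Measure E2)
    (fun r : ℝ => if r ≤ 1 then (β + 1) / Real.pi * (1 - r ^ 2) ^ β else 0)
  have h1 : ∫ x : E2, dens β x = ∫ x : E2, (fun r : ℝ => if r ≤ 1 then (β + 1) / Real.pi * (1 - r ^ 2) ^ β else 0) ‖x‖ := rfl
  rw [h1, h]
  have h2 : (volume : Measure E2).real (Metric.ball 0 1) = Real.pi := by
    rw [Measure.real, EuclideanSpace.volume_ball_fin_two]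
    simp [Real.pi_pos.le]
  rw [h2]
  have h3 : ∫ y in Set.Ioi (0:ℝ), y ^ (Module.finrank ℝ E2 - 1) •
      (if y ≤ 1 then (β + 1) / Real.pi * (1 - y ^ 2) ^ β else 0) = 1 / (2 * Real.pi) := by
    have e1 : ∀ y : ℝ, y ^ (Module.finrank ℝ E2 - 1) •
      (if y ≤ 1 then (β + 1) / Real.pi * (1 - y ^ 2) ^ β else 0) =
        (Set.Iic (1:ℝ)).indicator (fun y => y * ((β + 1) / Real.pi * (1 - y ^ 2) ^ β)) y := by
      intro y
      simp [Set.indicator]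
    simp_rw [e1]
    rw [setIntegral_indicator measurableSet_Iic]
    rw [show Set.Ioi (0:ℝ) ∩ Set.Iic 1 = Set.Ioc 0 1 from rfl,
      ← intervalIntegral.integral_of_le zero_le_one]
    have hd : ∀ x ∈ Set.uIcc (0:ℝ) 1, HasDerivAt (fun y : ℝ => -(1 / (2 * Real.pi)) * (1 - y^2)^(β+1))
        (x * ((β + 1) / Real.pi * (1 - x ^ 2) ^ β)) x := by
      intro x _
      have i1 : HasDerivAt (fun y : ℝ => 1 - y^2) (-(2 * x)) x := by
        simpa using ((hasDerivAt_pow 2 x).const_sub 1)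
      have i2 := (i1.rpow_const (p := β + 1) (Or.inr (by linarith))).const_mul (-(1 / (2 * Real.pi)))
      have i3 : -(1 / (2 * Real.pi)) * (-(2 * x) * (β + 1) * (1 - x ^ 2) ^ (β + 1 - 1)) =
          x * ((β + 1) / Real.pi * (1 - x ^ 2) ^ β) := by
        rw [add_sub_cancel_right]
        have := Real.pi_pos
        field_simp
      rw [← i3]
      exact i2
    have hcont : Continuous fun x : ℝ => x * ((β + 1) / Real.pi * (1 - x ^ 2) ^ β) := by
      have : Continuous fun x : ℝ => (1 - x^2) ^ β :=
        Continuous.rpow_const (by fun_prop) (fun x => Or.inr hβ)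
      fun_prop
    rw [intervalIntegral.integral_eq_sub_of_hasDerivAt hd (hcont.intervalIntegrable _ _)]
    have : (1 - (1:ℝ)^2) ^ (β + 1) = 0 := by
      rw [one_pow, sub_self, Real.zero_rpow (by linarith)]
    rw [this]; simp
  rw [h3]
  have := Real.pi_pos
  simp

lemma dens_integrable {β : ℝ} (hβ : 0 ≤ β) : Integrable (dens β) := by
  by_contra h
  have := integral_undef h
  rw [beta_mass hβ] at this
  norm_num at this

lemma beta_prob {β : ℝ} (hβ : 0 ≤ β) : IsProbabilityMeasure (betaMeasure β) := by
  constructor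
  rw [betaMeasure_eq, withDensity_apply _ MeasurableSet.univ, Measure.restrict_univ,
    ← ofReal_integral_eq_lintegral_ofReal (dens_integrable hβ)
      (Filter.Eventually.of_forall (dens_nonneg hβ)), beta_mass hβ, ENNReal.ofReal_one]

lemma beta_inv (β : ℝ) (F : E2 ≃ₗᵢ[ℝ] E2) : MeasurePreserving F (betaMeasure β) (betaMeasure β) := by
  refine ⟨F.continuous.measurable, ?_⟩
  ext s hs
  rw [Measure.map_apply F.continuous.measurable hs, betaMeasure_eq,
    withDensity_apply _ (F.continuous.measurable hs), withDensity_apply _ hs]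
  rw [← F.measurePreserving.setLIntegral_comp_preimage hs (by have := dens_meas β; fun_prop)]
  apply lintegral_congr
  intro x
  simp [dens]

lemma norm_sq_E2 (q : E2) : ‖q‖^2 = q 0^2 + q 1^2 := by
  rw [EuclideanSpace.norm_sq_eq]; simp [Fin.sum_univ_two]

lemma norm_le_one_E2 (q : E2) : ‖q‖ ≤ 1 ↔ q 0^2 + q 1^2 ≤ 1 := by
  rw [← norm_sq_E2, sq_le_one_iff₀ (norm_nonneg q)]

lemma box_eq (u1 u2 v1 v2 w : ℝ) : box u1 u2 v1 v2 w =
    (WithLp.ofLp : E2 → (Fin 2 → ℝ)) ⁻¹' Set.Icc ![u1 * w, 1 - v2 * w^2] ![u2 * w, 1 - v1 * w^2] := by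
  ext q
  simp [box, Set.mem_Icc, Pi.le_def, Fin.forall_fin_two]
  tauto

lemma box_meas (u1 u2 v1 v2 w : ℝ) : MeasurableSet (box u1 u2 v1 v2 w) := by
  rw [box_eq]
  exact (PiLp.volume_preserving_ofLp (Fin 2)).measurable measurableSet_Icc

lemma box_vol {u1 u2 v1 v2 w : ℝ} (hu : u1 ≤ u2) (hv : v1 ≤ v2) (hw : 0 < w) :
    volume (box u1 u2 v1 v2 w) = ENNReal.ofReal ((u2 - u1) * (v2 - v1) * w^3) := by
  rw [box_eq, (PiLp.volume_preserving_ofLp (Fin 2)).measure_preimage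
    measurableSet_Icc.nullMeasurableSet, Real.volume_Icc_pi]
  simp only [Fin.prod_univ_two, Matrix.cons_val_zero, Matrix.cons_val_one]
  rw [← ENNReal.ofReal_mul (by nlinarith)]
  congr 1; ring

lemma box_mass {β : ℝ} (hβ : 0 ≤ β) {u1 u2 v1 v2 w : ℝ} (hu : u1 ≤ u2) (hv : v1 ≤ v2) (hw : 0 < w)
    (hA : 1/200 ≤ (u2 - u1) * (v2 - v1))
    (h : ∀ q ∈ box u1 u2 v1 v2 w, q 0^2 + q 1^2 ≤ 1 - (1/20) * w^2) :
    ENNReal.ofReal ((β + 1) / Real.pi * (1/20)^β * (1/200) * w ^ (2 * β + 3)) ≤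
      betaMeasure β (box u1 u2 v1 v2 w) := by
  rw [betaMeasure_eq, withDensity_apply _ (box_meas ..)]
  have h1 : ∀ q ∈ box u1 u2 v1 v2 w, ENNReal.ofReal ((β + 1) / Real.pi * ((1/20) * w^2)^β) ≤
      ENNReal.ofReal (dens β q) := by
    intro q hq
    apply ENNReal.ofReal_le_ofReal
    have := h q hq
    rw [dens, if_pos ((norm_le_one_E2 q).2 (by nlinarith)), norm_sq_E2]
    apply mul_le_mul_of_nonneg_left _ (by positivity)
    exact Real.rpow_le_rpow (by positivity) (by linarith) hβ
  calc _ ≤ ENNReal.ofReal ((β + 1) / Real.pi * ((1/20) * w^2)^β) * volume (box u1 u2 v1 v2 w) := by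
        rw [box_vol hu hv hw, ← ENNReal.ofReal_mul (by positivity)]
        apply ENNReal.ofReal_le_ofReal
        rw [Real.mul_rpow (by norm_num) (by positivity), Real.rpow_add hw, Real.rpow_mul hw.le]
        have e : w ^ (3:ℝ) = w^3 := by norm_cast
        have e2 : w ^ (2:ℝ) = w^2 := by norm_cast
        rw [e, e2]
        have : (1/200) * w^3 ≤ (u2 - u1) * (v2 - v1) * w^3 :=
          mul_le_mul_of_nonneg_right hA (by positivity)
        calc _ = (β + 1) / Real.pi * ((1 / 20) ^ β * (w ^ 2) ^ β) * ((1/200) * w^3) := by ring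
          _ ≤ _ := mul_le_mul_of_nonneg_left this (by positivity)
    _ = ∫⁻ _ in box u1 u2 v1 v2 w, ENNReal.ofReal ((β + 1) / Real.pi * ((1/20) * w^2)^β) := by
        rw [setLIntegral_const]
    _ ≤ _ := setLIntegral_mono (by have := dens_meas β; fun_prop) h1

lemma Out_meas (w : ℝ) : MeasurableSet (Out w) := by
  have h1 : MeasurableSet {q : E2 | q 0 ^ 2 + q 1 ^ 2 ≤ 1} :=
    measurableSet_le (by fun_prop) (by fun_prop)
  have h2 : MeasurableSet {q : E2 | q 1 < 1 - 100 * w^2} :=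
    measurableSet_lt (by fun_prop) (by fun_prop)
  exact h1.inter h2

lemma Out_compl_mass {β : ℝ} (hβ : 0 ≤ β) {w : ℝ} (hw : 0 < w) (hw1 : w ≤ 1/100) :
    betaMeasure β (Out w)ᶜ ≤
      ENNReal.ofReal ((β + 1) / Real.pi * 200^β * 3000 * w ^ (2 * β + 3)) := by
  rw [betaMeasure_eq, withDensity_apply _ (Out_meas w).compl]
  have hw2 : 0 < w^2 := by positivity
  have h1 : ∀ q ∈ (Out w)ᶜ, ENNReal.ofReal (dens β q) ≤
      (box (-15) 15 0 100 w).indicator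
        (fun _ => ENNReal.ofReal ((β + 1) / Real.pi * (200 * w^2)^β)) q := by
    intro q hq
    by_cases hn : q 0^2 + q 1^2 ≤ 1
    · have hq1 : 1 - 100 * w^2 ≤ q 1 := by
        by_contra hc
        exact hq ⟨hn, not_le.1 hc⟩
      have hw4 : w^2 ≤ 1/10000 := by nlinarith
      have hpos : 0 ≤ 1 - 100 * w^2 := by linarith
      have hsq : (1 - 100 * w^2) * (1 - 100 * w^2) ≤ q 1 * q 1 :=
        mul_le_mul hq1 hq1 hpos (hpos.trans hq1)
      have hx : q 0^2 ≤ (15 * w)^2 := by nlinarith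
      have hx' := abs_le_of_sq_le_sq' hx (by positivity)
      have hb : q ∈ box (-15) 15 0 100 w :=
        ⟨by linarith [hx'.1], hx'.2, hq1, by nlinarith [sq_nonneg (q 0)]⟩
      rw [Set.indicator_of_mem hb]
      apply ENNReal.ofReal_le_ofReal
      rw [dens, if_pos ((norm_le_one_E2 q).2 hn), norm_sq_E2]
      apply mul_le_mul_of_nonneg_left _ (by positivity)
      exact Real.rpow_le_rpow (by linarith) (by nlinarith [sq_nonneg (q 0)]) hβ
    · rw [dens, if_neg (by rw [norm_le_one_E2]; exact hn)]
      simp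
  calc _ ≤ ∫⁻ q in (Out w)ᶜ, (box (-15) 15 0 100 w).indicator
        (fun _ => ENNReal.ofReal ((β + 1) / Real.pi * (200 * w^2)^β)) q :=
        setLIntegral_mono (measurable_const.indicator (box_meas ..)) h1
    _ ≤ ∫⁻ q, (box (-15) 15 0 100 w).indicator
        (fun _ => ENNReal.ofReal ((β + 1) / Real.pi * (200 * w^2)^β)) q := setLIntegral_le_lintegral _ _
    _ = ENNReal.ofReal ((β + 1) / Real.pi * (200 * w^2)^β) * volume (box (-15) 15 0 100 w) := by
        rw [lintegral_indicator_const (box_meas ..)]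
    _ = _ := by
        rw [box_vol (by norm_num) (by norm_num) hw, ← ENNReal.ofReal_mul (by positivity)]
        congr 1
        rw [Real.mul_rpow (by norm_num) (by positivity), Real.rpow_add hw, Real.rpow_mul hw.le]
        have e : w ^ (3:ℝ) = w^3 := by norm_cast
        have e2 : w ^ (2:ℝ) = w^2 := by norm_cast
        rw [e, e2]
        ring


noncomputable def rlin (θ : ℝ) : E2 →ₗ[ℝ] E2 where
  toFun q := !₂[Real.cos θ * q 0 + Real.sin θ * q 1, Real.sin θ * q 0 - Real.cos θ * q 1]
  map_add' x y := by ext i; fin_cases i <;> simp <;> ring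
  map_smul' c x := by ext i; fin_cases i <;> simp <;> ring

lemma rlin_inv (θ : ℝ) : Function.Involutive (rlin θ) := by
  intro q
  have := Real.sin_sq_add_cos_sq θ
  ext i; fin_cases i
  · simp [rlin]; linear_combination q 0 * this
  · simp [rlin]; linear_combination q 1 * this

noncomputable def rfl2 (θ : ℝ) : E2 ≃ₗᵢ[ℝ] E2 where
  toLinearEquiv := LinearEquiv.ofInvolutive (rlin θ) (rlin_inv θ)
  norm_map' q := by
    have := Real.sin_sq_add_cos_sq θ
    rw [← sq_eq_sq₀ (norm_nonneg _) (norm_nonneg _), norm_sq_E2, norm_sq_E2]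
    simp [rlin]
    linear_combination (q 0^2 + q 1^2) * this

lemma rfl2_0 (θ : ℝ) (q : E2) : rfl2 θ q 0 = Real.cos θ * q 0 + Real.sin θ * q 1 := by
  simp [rfl2, rlin]
lemma rfl2_1 (θ : ℝ) (q : E2) : rfl2 θ q 1 = Real.sin θ * q 0 - Real.cos θ * q 1 := by
  simp [rfl2, rlin]
lemma rfl2_inv (θ : ℝ) (q : E2) : rfl2 θ (rfl2 θ q) = q := rlin_inv θ q
lemma rfl2_sq (θ : ℝ) (q : E2) : rfl2 θ q 0^2 + rfl2 θ q 1^2 = q 0^2 + q 1^2 := by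
  rw [← norm_sq_E2, ← norm_sq_E2, LinearIsometryEquiv.norm_map]

lemma pi_0 (q : E2) : rfl2 Real.pi q 0 = - q 0 := by simp [rfl2_0]
lemma pi_1 (q : E2) : rfl2 Real.pi q 1 = q 1 := by simp [rfl2_1]

lemma pi_cP {w : ℝ} {q : E2} : rfl2 Real.pi q ∈ cP w ↔ q ∈ cM w := by
  simp only [cP, cM, mem_box, pi_0, pi_1]
  constructor <;> rintro ⟨h1, h2, h3, h4⟩ <;> exact ⟨by linarith, by linarith, h3, h4⟩
lemma pi_cM {w : ℝ} {q : E2} : rfl2 Real.pi q ∈ cM w ↔ q ∈ cP w := by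
  simp only [cP, cM, mem_box, pi_0, pi_1]
  constructor <;> rintro ⟨h1, h2, h3, h4⟩ <;> exact ⟨by linarith, by linarith, h3, h4⟩

open Classical in
noncomputable def sig0 (w : ℝ) (q : E2) : E2 := if q ∈ cP w ∪ cM w then rfl2 Real.pi q else q

lemma pi_Z {w : ℝ} {q : E2} : rfl2 Real.pi q ∈ cP w ∪ cM w ↔ q ∈ cP w ∪ cM w := by
  simp only [Set.mem_union, pi_cP, pi_cM]; tauto

lemma sig0_invol (w : ℝ) (q : E2) : sig0 w (sig0 w q) = q := by
  unfold sig0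
  by_cases h : q ∈ cP w ∪ cM w
  · rw [if_pos h, if_pos (pi_Z.2 h), rfl2_inv]
  · rw [if_neg h, if_neg h]

lemma Z_meas (w : ℝ) : MeasurableSet (cP w ∪ cM w) := (box_meas ..).union (box_meas ..)

lemma sig0_meas (w : ℝ) : Measurable (sig0 w) := by
  unfold sig0
  exact Measurable.ite (Z_meas w) (rfl2 Real.pi).continuous.measurable measurable_id

lemma sig0_mp (β w : ℝ) : MeasurePreserving (sig0 w) (betaMeasure β) (betaMeasure β) := by
  refine ⟨sig0_meas w, ?_⟩
  ext s hs
  have hZ := Z_meas w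
  rw [Measure.map_apply (sig0_meas w) hs, ← measure_inter_add_sdiff _ hZ,
    ← measure_inter_add_sdiff s hZ]
  have e1 : sig0 w ⁻¹' s ∩ (cP w ∪ cM w) = rfl2 Real.pi ⁻¹' (s ∩ (cP w ∪ cM w)) := by
    ext q
    simp only [Set.mem_inter_iff, Set.mem_preimage, pi_Z]
    refine and_congr_left fun h => ?_
    rw [sig0, if_pos h]
  have e2 : sig0 w ⁻¹' s \ (cP w ∪ cM w) = s \ (cP w ∪ cM w) := by
    ext q
    simp only [Set.mem_sdiff, Set.mem_preimage]
    refine and_congr_left fun h => ?_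
    rw [sig0, if_neg h]
  rw [e1, e2, (beta_inv β (rfl2 Real.pi)).measure_preimage (hs.inter hZ).nullMeasurableSet]

lemma vertCount_comp {n : ℕ} (F : E2 ≃ₗᵢ[ℝ] E2) (ω : Fin n → E2) :
    vertCount (fun j => F (ω j)) = vertCount ω := by
  unfold vertCount
  have h1 : Set.range (fun j => F (ω j)) = F.toLinearEquiv.toLinearMap '' Set.range ω := by
    rw [← Set.range_comp]; rfl
  have h2 : Set.extremePoints ℝ (convexHull ℝ (Set.range fun j => F (ω j))) =
      F '' Set.extremePoints ℝ (convexHull ℝ (Set.range ω)) := by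
    rw [h1, ← LinearMap.image_convexHull]
    exact (image_extremePoints F _).symm
  rw [h2, Nat.card_image_of_injective F.injective]

lemma vertCount_le {n : ℕ} (ω : Fin n → E2) : vertCount ω ≤ n := by
  unfold vertCount
  have := Nat.card_mono (Set.finite_range ω) (extremePoints_convexHull_subset (𝕜 := ℝ) (A := Set.range ω))
  have h2 : Nat.card (Set.range ω) ≤ n := by simpa only [Nat.card_fin] using Finite.card_range_le ω
  exact_mod_cast this.trans h2

lemma hull_closed {n : ℕ} (i : Fin n) (J : Set (Fin n)) :
    IsClosed {ω : Fin n → E2 | ω i ∈ convexHull ℝ (ω '' J)} := by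
  let D : Set (Fin n → ℝ) := convexHull ℝ ((fun j => Pi.single j (1:ℝ)) '' J)
  have hD : IsCompact D := (Set.toFinite _).isCompact_convexHull (𝕜 := ℝ)
  have : CompactSpace D := isCompact_iff_compactSpace.1 hD
  have h1 : {ω : Fin n → E2 | ω i ∈ convexHull ℝ (ω '' J)} =
      Prod.snd '' {x : D × (Fin n → E2) | ∑ j, (x.1 : Fin n → ℝ) j • x.2 j = x.2 i} := by
    ext ω
    have e1 : ω '' J = Fintype.linearCombination ℝ ω '' ((fun j => Pi.single j (1:ℝ)) '' J) := by
      rw [Set.image_image]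
      apply Set.image_congr
      intro j _
      simp
    rw [Set.mem_setOf_eq, e1, ← LinearMap.image_convexHull]
    constructor
    · rintro ⟨c, hc, h⟩
      exact ⟨(⟨c, hc⟩, ω), by simpa [Fintype.linearCombination_apply] using h, rfl⟩
    · rintro ⟨⟨⟨c, hc⟩, ω'⟩, h, rfl⟩
      exact ⟨c, hc, by simpa [Fintype.linearCombination_apply] using h⟩
  rw [h1]
  apply isClosedMap_snd_of_compactSpace
  apply isClosed_eq
  · apply continuous_finsetSum
    intro j _
    apply Continuous.fun_smul
    · exact (continuous_apply j).comp (continuous_subtype_val.comp continuous_fst)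
    · exact (continuous_apply j).comp continuous_snd
  · exact (continuous_apply i).comp continuous_snd

def Mi {n : ℕ} (i : Fin n) : Set (Fin n → E2) :=
  {ω | (∀ j < i, ω j ≠ ω i) ∧ ω i ∈ VV (Set.range ω)}

lemma Mi_meas {n : ℕ} (i : Fin n) : MeasurableSet (Mi i) := by
  have hne : ∀ j : Fin n, MeasurableSet {ω : Fin n → E2 | ω j ≠ ω i} := fun j =>
    (measurableSet_eq_fun (measurable_pi_apply j) (measurable_pi_apply i)).compl
  have h1 : MeasurableSet {ω : Fin n → E2 | ∀ j < i, ω j ≠ ω i} := by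
    have : {ω : Fin n → E2 | ∀ j < i, ω j ≠ ω i} = ⋂ j, ⋂ (_ : j < i), {ω | ω j ≠ ω i} := by
      ext ω; simp
    rw [this]
    exact MeasurableSet.iInter fun j => MeasurableSet.iInter fun _ => hne j
  have h2 : MeasurableSet {ω : Fin n → E2 | ω i ∈ convexHull ℝ (Set.range ω \ {ω i})} := by
    have : {ω : Fin n → E2 | ω i ∈ convexHull ℝ (Set.range ω \ {ω i})} =
        ⋃ J : Finset (Fin n), (⋂ j, {ω : Fin n → E2 | j ∈ J ↔ ω j ≠ ω i}) ∩
          {ω | ω i ∈ convexHull ℝ (ω '' J)} := by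
      ext ω
      simp only [Set.mem_setOf_eq, Set.mem_iUnion, Set.mem_inter_iff, Set.mem_iInter]
      have key : ∀ J : Finset (Fin n), (∀ j, j ∈ J ↔ ω j ≠ ω i) → ω '' J = Set.range ω \ {ω i} := by
        intro J hJ
        ext q
        constructor
        · rintro ⟨j, hj, rfl⟩
          exact ⟨⟨j, rfl⟩, (hJ j).1 hj⟩
        · rintro ⟨⟨j, rfl⟩, h⟩
          exact ⟨j, (hJ j).2 h, rfl⟩
      constructor
      · intro h
        classical
        have hJ : ∀ j, j ∈ Finset.univ.filter (fun j => ω j ≠ ω i) ↔ ω j ≠ ω i := by simp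
        exact ⟨_, hJ, by rw [key _ hJ]; exact h⟩
      · rintro ⟨J, hJ, h⟩
        rwa [key J hJ] at h
    rw [this]
    refine MeasurableSet.iUnion fun J => (MeasurableSet.iInter fun j => ?_).inter
      (hull_closed i J).measurableSet
    by_cases hj : j ∈ J
    · simpa [hj] using hne j
    · have he : MeasurableSet {ω : Fin n → E2 | ω j = ω i} :=
        measurableSet_eq_fun (measurable_pi_apply j) (measurable_pi_apply i)
      simpa [hj] using he
  have h3 : Mi i = {ω : Fin n → E2 | ∀ j < i, ω j ≠ ω i} ∩
      {ω : Fin n → E2 | ω i ∈ convexHull ℝ (Set.range ω \ {ω i})}ᶜ := by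
    ext ω
    simp only [Mi, Set.mem_inter_iff, Set.mem_setOf_eq, Set.mem_compl_iff]
    rw [mem_VV_iff (Set.finite_range ω) ⟨i, rfl⟩]
  rw [h3]
  exact h1.inter h2.compl

lemma vertCount_eq {n : ℕ} (ω : Fin n → E2) :
    vertCount ω = ∑ i, (Mi i).indicator (fun _ => (1:ℝ)) ω := by
  classical
  have h1 : VV (Set.range ω) = ω '' {i | ω ∈ Mi i} := by
    ext q
    constructor
    · intro hq
      obtain ⟨j, rfl⟩ := extremePoints_convexHull_subset hq
      have hne : (Finset.univ.filter (fun i => ω i = ω j)).Nonempty := ⟨j, by simp⟩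
      refine ⟨(Finset.univ.filter (fun i => ω i = ω j)).min' hne, ?_, ?_⟩
      · have hm := Finset.min'_mem _ hne
        simp only [Finset.mem_filter, Finset.mem_univ, true_and] at hm
        refine ⟨fun k hk h => ?_, by rw [hm]; exact hq⟩
        have := Finset.min'_le (Finset.univ.filter (fun i => ω i = ω j)) k
          (by simp only [Finset.mem_filter, Finset.mem_univ, true_and]; rw [h, hm])
        exact absurd hk (not_lt.2 this)
      · have hm := Finset.min'_mem _ hne
        simpa using hm
    · rintro ⟨i, hi, rfl⟩
      exact hi.2
  have h2 : Set.InjOn ω {i | ω ∈ Mi i} := by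
    intro i hi j hj h
    rcases lt_trichotomy i j with hlt | heq | hlt
    · exact absurd h (hj.1 i hlt)
    · exact heq
    · exact absurd h.symm (hi.1 j hlt)
  unfold vertCount
  change ((Nat.card (VV (Set.range ω)) : ℕ) : ℝ) = _
  rw [h1, Nat.card_image_of_injOn h2]
  simp [Set.indicator_apply, Nat.card_eq_fintype_card, Fintype.card_subtype]

lemma vertCount_meas (n : ℕ) : Measurable (vertCount : (Fin n → E2) → ℝ) := by
  have : (vertCount : (Fin n → E2) → ℝ) = fun ω => ∑ i, (Mi i).indicator (fun _ => (1:ℝ)) ω := by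
    funext ω; exact vertCount_eq ω
  rw [this]
  exact Finset.measurable_fun_sum _ fun i _ => measurable_const.indicator (Mi_meas i)


def AA {n : ℕ} (S : Fin 4 → Set E2) (O : Set E2) (e : Fin 4 ↪ Fin n) : Set (Fin n → E2) :=
  {ω | (∀ a, ω (e a) ∈ S a) ∧ ∀ j, j ∉ Set.range e → ω j ∈ O}
def GG (n : ℕ) (S : Fin 4 → Set E2) (O : Set E2) : Set (Fin n → E2) := ⋃ e, AA S O e

lemma mem_GG {n : ℕ} {S : Fin 4 → Set E2} {O : Set E2} {ω : Fin n → E2} :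
    ω ∈ GG n S O ↔ ∃ e : Fin 4 ↪ Fin n, (∀ a, ω (e a) ∈ S a) ∧ ∀ j, j ∉ Set.range e → ω j ∈ O := by
  simp [GG, AA]

lemma GG_pre {n : ℕ} {S S' : Fin 4 → Set E2} {O O' : Set E2} {σ : E2 → E2}
    (h1 : ∀ a q, σ q ∈ S a ↔ q ∈ S' a) (h2 : ∀ q, σ q ∈ O ↔ q ∈ O') (ω : Fin n → E2) :
    (fun j => σ (ω j)) ∈ GG n S O ↔ ω ∈ GG n S' O' := by
  simp only [mem_GG, h1, h2]

lemma AA_eq {n : ℕ} (S : Fin 4 → Set E2) (O : Set E2) (e : Fin 4 ↪ Fin n) :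
    AA S O e = Set.pi Set.univ (Function.extend e S (fun _ => O)) := by
  ext ω
  simp only [AA, Set.mem_pi, Set.mem_univ, true_imp_iff]
  constructor
  · rintro ⟨h1, h2⟩ j
    by_cases hj : j ∈ Set.range e
    · obtain ⟨a, rfl⟩ := hj
      rw [e.injective.extend_apply]; exact h1 a
    · rw [Function.extend_apply' _ _ _ hj]; exact h2 j hj
  · intro h
    refine ⟨fun a => ?_, fun j hj => ?_⟩
    · have := h (e a); rwa [e.injective.extend_apply] at this
    · have := h j; rwa [Function.extend_apply' _ _ _ hj] at this

lemma AA_meas {n : ℕ} {S : Fin 4 → Set E2} {O : Set E2} (hS : ∀ a, MeasurableSet (S a))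
    (hO : MeasurableSet O) (e : Fin 4 ↪ Fin n) : MeasurableSet (AA S O e) := by
  rw [AA_eq]
  apply MeasurableSet.univ_pi
  intro j
  by_cases hj : j ∈ Set.range e
  · obtain ⟨a, rfl⟩ := hj
    rw [e.injective.extend_apply]; exact hS a
  · rw [Function.extend_apply' _ _ _ hj]; exact hO

lemma GG_meas {n : ℕ} {S : Fin 4 → Set E2} {O : Set E2} (hS : ∀ a, MeasurableSet (S a))
    (hO : MeasurableSet O) : MeasurableSet (GG n S O) :=
  MeasurableSet.iUnion fun e => AA_meas hS hO e

lemma AA_mass {n : ℕ} (μ : Measure E2) [SigmaFinite μ] {S : Fin 4 → Set E2} {O : Set E2}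
    {c o : ENNReal} (hc : ∀ a, c ≤ μ (S a)) (ho : o ≤ μ O) (ho1 : o ≤ 1) (e : Fin 4 ↪ Fin n) :
    c^4 * o^n ≤ Measure.pi (fun _ : Fin n => μ) (AA S O e) := by
  classical
  rw [AA_eq, Measure.pi_pi, ← Finset.prod_mul_prod_compl (Finset.univ.map e), Finset.prod_map]
  gcongr
  · calc c^4 = ∏ _a : Fin 4, c := by simp
      _ ≤ _ := by
        apply Finset.prod_le_prod' 
        intro a _
        rw [e.injective.extend_apply]; exact hc a
  · calc o^n ≤ o^((Finset.univ.map e)ᶜ.card) := by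
          apply pow_le_pow_right_of_le_one' ho1
          exact (Finset.card_le_univ _).trans (by simp)
      _ = ∏ _j ∈ (Finset.univ.map e)ᶜ, o := by simp
      _ ≤ _ := by
        apply Finset.prod_le_prod'
        intro j hj
        have : j ∉ Set.range e := by simpa using hj
        rw [Function.extend_apply' _ _ _ this]; exact ho

lemma AA_disj {n : ℕ} {S S' : Fin 4 → Set E2} {O : Set E2}
    (h1 : ∀ a b q, q ∈ S a → q ∈ S' b → a = b) (h2 : ∀ a q, q ∈ S a → q ∉ O)
    {e e' : Fin 4 ↪ Fin n} {ω : Fin n → E2} (h : ω ∈ AA S O e) (h' : ω ∈ AA S' O e') : e = e' := by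
  ext a
  by_cases hr : e a ∈ Set.range e'
  · obtain ⟨b, hb⟩ := hr
    have := h1 a b (ω (e a)) (h.1 a) (by rw [← hb]; exact h'.1 b)
    subst this
    rw [hb]
  · exact absurd (h'.2 _ hr) (h2 a _ (h.1 a))

lemma GG_mass {n : ℕ} (μ : Measure E2) [SigmaFinite μ] {S : Fin 4 → Set E2} {O : Set E2}
    (hS : ∀ a, MeasurableSet (S a)) (hO : MeasurableSet O)
    (h1 : ∀ a b q, q ∈ S a → q ∈ S b → a = b) (h2 : ∀ a q, q ∈ S a → q ∉ O)
    {c o : ENNReal} (hc : ∀ a, c ≤ μ (S a)) (ho : o ≤ μ O) (ho1 : o ≤ 1) :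
    (n.descFactorial 4 : ENNReal) * (c^4 * o^n) ≤ Measure.pi (fun _ : Fin n => μ) (GG n S O) := by
  classical
  rw [GG, measure_iUnion _ (fun e => AA_meas hS hO e), tsum_fintype]
  · calc (n.descFactorial 4 : ENNReal) * (c^4 * o^n) = ∑ _e : Fin 4 ↪ Fin n, c^4*o^n := by
          simp [Fintype.card_embedding_eq]
      _ ≤ _ := Finset.sum_le_sum fun e _ => AA_mass μ hc ho ho1 e
  · intro e e' hne
    rw [Function.onFun, Set.disjoint_left]
    intro ω h h'
    exact hne (AA_disj h1 h2 h h')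

/-! cells -/
def sP (w : ℝ) : Fin 4 → Set E2 := ![cL w, cR w, cC w, cP w]
def sM (w : ℝ) : Fin 4 → Set E2 := ![cL w, cR w, cC w, cM w]

lemma sP_meas (w : ℝ) (a : Fin 4) : MeasurableSet (sP w a) := by
  fin_cases a <;> exact box_meas ..
lemma sM_meas (w : ℝ) (a : Fin 4) : MeasurableSet (sM w a) := by
  fin_cases a <;> exact box_meas ..

lemma sP_cap {w : ℝ} (hw : 0 < w) (hw1 : w ≤ 1/100) {a : Fin 4} {q : E2} (h : q ∈ sP w a) :
    q ∈ Cap w := by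
  have : 0 < w^2 := by positivity
  fin_cases a
  · exact ⟨(cL_n hw hw1 h).2.trans (by linarith), by linarith [(show q ∈ cL w from h).2.2.1]⟩
  · exact ⟨(cR_n hw hw1 h).2.trans (by linarith), by linarith [(show q ∈ cR w from h).2.2.1]⟩
  · exact ⟨(cC_n hw hw1 h).2.trans (by linarith), by linarith [(show q ∈ cC w from h).2.2.1]⟩
  · exact ⟨(cP_n hw hw1 h).2.trans (by linarith), by linarith [(show q ∈ cP w from h).2.2.1]⟩
lemma sM_cap {w : ℝ} (hw : 0 < w) (hw1 : w ≤ 1/100) {a : Fin 4} {q : E2} (h : q ∈ sM w a) :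
    q ∈ Cap w := by
  have : 0 < w^2 := by positivity
  fin_cases a
  · exact ⟨(cL_n hw hw1 h).2.trans (by linarith), by linarith [(show q ∈ cL w from h).2.2.1]⟩
  · exact ⟨(cR_n hw hw1 h).2.trans (by linarith), by linarith [(show q ∈ cR w from h).2.2.1]⟩
  · exact ⟨(cC_n hw hw1 h).2.trans (by linarith), by linarith [(show q ∈ cC w from h).2.2.1]⟩
  · exact ⟨(cM_n hw hw1 h).2.trans (by linarith), by linarith [(show q ∈ cM w from h).2.2.1]⟩
lemma Z_cap {w : ℝ} (hw : 0 < w) (hw1 : w ≤ 1/100) {q : E2} (h : q ∈ cP w ∪ cM w) :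
    q ∈ Cap w := h.elim (fun h => sP_cap (a := 3) hw hw1 h) (fun h => sM_cap (a := 3) hw hw1 h)
lemma cap_out {w : ℝ} {q : E2} (h : q ∈ Cap w) : q ∉ Out w := fun h' => absurd h.2 (not_le.2 h'.2)

lemma cells_disj {w : ℝ} (hw : 0 < w) {q : E2} :
    (q ∈ cL w → q ∉ cR w ∧ q ∉ cC w ∧ q ∉ cP w ∧ q ∉ cM w) ∧
    (q ∈ cR w → q ∉ cC w ∧ q ∉ cP w ∧ q ∉ cM w) ∧ (q ∈ cC w → q ∉ cP w ∧ q ∉ cM w) ∧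
    (q ∈ cP w → q ∉ cM w) := by
  have : 0 < w^2 := by positivity
  simp only [cL, cR, cC, cP, cM, mem_box]
  refine ⟨?_, ?_, ?_, ?_⟩
  · rintro ⟨h1, h2, h3, h4⟩
    refine ⟨?_, ?_, ?_, ?_⟩ <;> (rintro ⟨h5, h6, h7, h8⟩; linarith)
  · rintro ⟨h1, h2, h3, h4⟩
    refine ⟨?_, ?_, ?_⟩ <;> (rintro ⟨h5, h6, h7, h8⟩; linarith)
  · rintro ⟨h1, h2, h3, h4⟩
    refine ⟨?_, ?_⟩ <;> (rintro ⟨h5, h6, h7, h8⟩; linarith)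
  · rintro ⟨h1, h2, h3, h4⟩
    (rintro ⟨h5, h6, h7, h8⟩; linarith)

lemma sP_disj {w : ℝ} (hw : 0 < w) (a b : Fin 4) (q : E2) (h : q ∈ sP w a) (h' : q ∈ sP w b) :
    a = b := by
  have := cells_disj hw (q := q)
  fin_cases a <;> fin_cases b <;> simp [sP] at h h' ⊢ <;> tauto

lemma sig0_of_not {w : ℝ} {q : E2} (h : q ∉ cP w ∪ cM w) : sig0 w q = q := by
  rw [sig0, if_neg h]
lemma sig0_of {w : ℝ} {q : E2} (h : q ∈ cP w ∪ cM w) : sig0 w q = rfl2 Real.pi q := by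
  rw [sig0, if_pos h]
lemma sig0_Z {w : ℝ} {q : E2} : sig0 w q ∈ cP w ∪ cM w ↔ q ∈ cP w ∪ cM w := by
  by_cases h : q ∈ cP w ∪ cM w
  · rw [sig0_of h, pi_Z]
  · rw [sig0_of_not h]

noncomputable def sg (θ w : ℝ) (q : E2) : E2 := rfl2 θ (sig0 w (rfl2 θ q))
lemma sg_invol (θ w : ℝ) (q : E2) : sg θ w (sg θ w q) = q := by
  simp [sg, rfl2_inv, sig0_invol]
lemma sg_mp (β θ w : ℝ) : MeasurePreserving (sg θ w) (betaMeasure β) (betaMeasure β) :=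
  (beta_inv β (rfl2 θ)).comp ((sig0_mp β w).comp (beta_inv β (rfl2 θ)))

lemma sg_disj {θ w : ℝ} {X : Set E2} (h : ∀ q, rfl2 θ q ∈ cP w ∪ cM w → q ∉ X) (q : E2) :
    sg θ w q ∈ X ↔ q ∈ X := by
  by_cases hq : rfl2 θ q ∈ cP w ∪ cM w
  · have h1 := h q hq
    have h2 := h (sg θ w q) (by rw [sg, rfl2_inv, sig0_Z]; exact hq)
    tauto
  · rw [sg, sig0_of_not hq, rfl2_inv]

lemma sg_sub {θ w : ℝ} {X : Set E2} (h : ∀ q, rfl2 θ q ∈ cP w ∪ cM w → q ∈ X) (q : E2) :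
    sg θ w q ∈ X ↔ q ∈ X := by
  have := sg_disj (X := Xᶜ) (fun q hq => by simpa using h q hq) q
  simpa [not_iff_not] using this

lemma sig0_P {w : ℝ} {q : E2} : sig0 w q ∈ cP w ↔ q ∈ cM w := by
  by_cases h : q ∈ cP w ∪ cM w
  · rw [sig0_of h, pi_cP]
  · rw [sig0_of_not h]
    simp only [Set.mem_union, not_or] at h
    tauto
lemma sig0_M {w : ℝ} {q : E2} : sig0 w q ∈ cM w ↔ q ∈ cP w := by
  rw [← sig0_P, sig0_invol]

lemma sg_key {θ w : ℝ} {X : Set E2} (h : ∀ q ∈ cP w ∪ cM w, q ∉ X) (q : E2) :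
    sg θ w q ∈ rfl2 θ ⁻¹' X ↔ q ∈ rfl2 θ ⁻¹' X := by
  apply sg_disj
  intro q hq
  rw [Set.mem_preimage]
  exact h _ hq

lemma sg_P {θ w : ℝ} (hw : 0 < w) (a : Fin 4) (q : E2) :
    sg θ w q ∈ rfl2 θ ⁻¹' sP w a ↔ q ∈ rfl2 θ ⁻¹' sM w a := by
  fin_cases a
  · refine sg_key (X := cL w) (fun q hq hl => ?_) q
    have hd := (cells_disj hw (q := q)).1 hl
    exact hq.elim hd.2.2.1 hd.2.2.2
  · refine sg_key (X := cR w) (fun q hq hl => ?_) q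
    have hd := (cells_disj hw (q := q)).2.1 hl
    exact hq.elim hd.2.1 hd.2.2
  · refine sg_key (X := cC w) (fun q hq hl => ?_) q
    have hd := (cells_disj hw (q := q)).2.2.1 hl
    exact hq.elim hd.1 hd.2
  · change rfl2 θ (sg θ w q) ∈ cP w ↔ rfl2 θ q ∈ cM w
    rw [sg, rfl2_inv, sig0_P]

lemma sg_M {θ w : ℝ} (hw : 0 < w) (a : Fin 4) (q : E2) :
    sg θ w q ∈ rfl2 θ ⁻¹' sM w a ↔ q ∈ rfl2 θ ⁻¹' sP w a := by
  rw [← sg_P hw, sg_invol]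

lemma sg_Out {θ w : ℝ} (hw : 0 < w) (hw1 : w ≤ 1/100) (q : E2) :
    sg θ w q ∈ rfl2 θ ⁻¹' Out w ↔ q ∈ rfl2 θ ⁻¹' Out w :=
  sg_key (fun _ hq => cap_out (Z_cap hw hw1 hq)) q

lemma cap_near {θ w : ℝ} {q : E2} (h : rfl2 θ q ∈ Cap w) :
    (q 0 - Real.sin θ)^2 + (q 1 + Real.cos θ)^2 ≤ 200 * w^2 := by
  obtain ⟨h1, h2⟩ := h
  rw [rfl2_sq] at h1
  rw [rfl2_1] at h2
  have := Real.sin_sq_add_cos_sq θ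
  nlinarith

lemma cap_disj {θ φ w : ℝ} (hw : 0 < w) (h1 : 50 * w ≤ |θ - φ|) (h2 : |θ - φ| ≤ 1) {q : E2}
    (h : rfl2 θ q ∈ Cap w) (h' : rfl2 φ q ∈ Cap w) : False := by
  have a1 := cap_near h
  have a2 := cap_near h'
  have b1 : Real.cos (θ - φ) ≤ 1 - 2 / Real.pi^2 * (θ - φ)^2 :=
    Real.cos_le_one_sub_mul_cos_sq (h2.trans (by linarith [Real.pi_gt_three]))
  have b2 : (50 * w)^2 ≤ (θ - φ)^2 := by
    rw [← sq_abs (θ - φ)]; gcongr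
  have b3 : (1:ℝ)/5 ≤ 2 / Real.pi^2 := by
    rw [div_le_div_iff₀ (by norm_num) (by positivity)]
    nlinarith [Real.pi_lt_d2, Real.pi_gt_three]
  have hw2 : 0 < w^2 := by positivity
  have b4 : (1:ℝ)/5 * (50*w)^2 ≤ 2 / Real.pi^2 * (θ - φ)^2 := by gcongr
  rw [Real.cos_sub] at b1
  have s1 := Real.sin_sq_add_cos_sq θ
  have s2 := Real.sin_sq_add_cos_sq φ
  have c1 : (Real.sin θ - Real.sin φ)^2 + (Real.cos θ - Real.cos φ)^2 ≤ 800 * w^2 := by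
    nlinarith [sq_nonneg ((q 0 - Real.sin θ) + (q 0 - Real.sin φ)),
      sq_nonneg ((q 1 + Real.cos θ) + (q 1 + Real.cos φ))]
  nlinarith

lemma sg_k {θ φ w : ℝ} (hw : 0 < w) (hw1 : w ≤ 1/100) (h1 : 50 * w ≤ |θ - φ|) (h2 : |θ - φ| ≤ 1)
    (q : E2) : (∀ a, sg θ w q ∈ rfl2 φ ⁻¹' sP w a ↔ q ∈ rfl2 φ ⁻¹' sP w a) ∧
      (∀ a, sg θ w q ∈ rfl2 φ ⁻¹' sM w a ↔ q ∈ rfl2 φ ⁻¹' sM w a) ∧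
      (sg θ w q ∈ rfl2 φ ⁻¹' Out w ↔ q ∈ rfl2 φ ⁻¹' Out w) := by
  refine ⟨fun a => sg_disj (fun q hq hq' => cap_disj hw h1 h2 (Z_cap hw hw1 hq) (sP_cap hw hw1 hq')) q,
    fun a => sg_disj (fun q hq hq' => cap_disj hw h1 h2 (Z_cap hw hw1 hq) (sM_cap hw hw1 hq')) q,
    sg_sub (fun q hq => ?_) q⟩
  have hc := Z_cap hw hw1 hq
  have hn : rfl2 φ q 0^2 + rfl2 φ q 1^2 ≤ 1 := by
    rw [rfl2_sq, ← rfl2_sq θ]; exact hc.1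
  refine ⟨hn, ?_⟩
  by_contra hcon
  exact cap_disj hw h1 h2 hc ⟨hn, not_lt.1 hcon⟩

lemma vc_diff0 {n : ℕ} {w : ℝ} (hw : 0 < w) (hw1 : w ≤ 1/100) {ω : Fin n → E2}
    {e : Fin 4 ↪ Fin n} (h : ω ∈ AA (sP w) (Out w) e) :
    vertCount ω = vertCount (fun j => sig0 w (ω j)) + 1 := by
  have hr : ∀ ω : Fin n → E2, Set.range ω = ω '' (Set.range e)ᶜ ∪ {ω (e 0), ω (e 1), ω (e 2), ω (e 3)} := by
    intro ω
    ext q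
    constructor
    · rintro ⟨j, rfl⟩
      by_cases hj : j ∈ Set.range e
      · obtain ⟨a, rfl⟩ := hj
        right
        fin_cases a <;> simp
      · exact Or.inl ⟨j, hj, rfl⟩
    · rintro (⟨j, _, rfl⟩ | h)
      · exact ⟨j, rfl⟩
      · simp only [Set.mem_insert_iff, Set.mem_singleton_iff] at h
        rcases h with rfl | rfl | rfl | rfl <;> exact ⟨_, rfl⟩
  have hd := fun q => cells_disj hw (q := q)
  have f0 : ω (e 0) ∈ cL w := h.1 0
  have f1 : ω (e 1) ∈ cR w := h.1 1
  have f2 : ω (e 2) ∈ cC w := h.1 2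
  have f3 : ω (e 3) ∈ cP w := h.1 3
  have g0 : sig0 w (ω (e 0)) = ω (e 0) := sig0_of_not (by
    have := hd (ω (e 0)); simp only [Set.mem_union]; tauto)
  have g1 : sig0 w (ω (e 1)) = ω (e 1) := sig0_of_not (by
    have := hd (ω (e 1)); simp only [Set.mem_union]; tauto)
  have g2 : sig0 w (ω (e 2)) = ω (e 2) := sig0_of_not (by
    have := hd (ω (e 2)); simp only [Set.mem_union]; tauto)
  have gP : (fun j => sig0 w (ω j)) '' (Set.range e)ᶜ = ω '' (Set.range e)ᶜ := by
    apply Set.image_congr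
    intro j hj
    exact sig0_of_not fun hz => cap_out (Z_cap hw hw1 hz) (h.2 j hj)
  have hPo : ω '' (Set.range e)ᶜ ⊆ Out w := by
    rintro _ ⟨j, hj, rfl⟩; exact h.2 j hj
  have := card_diff hw hw1 (Set.toFinite _) hPo f0 f1 f2 f3 (sig0_M.2 f3)
  unfold vertCount
  rw [hr ω, hr (fun j => sig0 w (ω j)), gP, g0, g1, g2]
  exact_mod_cast this

def Gp (n : ℕ) (w θ : ℝ) : Set (Fin n → E2) := GG n (fun a => rfl2 θ ⁻¹' sP w a) (rfl2 θ ⁻¹' Out w)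
def Gm (n : ℕ) (w θ : ℝ) : Set (Fin n → E2) := GG n (fun a => rfl2 θ ⁻¹' sM w a) (rfl2 θ ⁻¹' Out w)
noncomputable def TT (n : ℕ) (w θ : ℝ) (ω : Fin n → E2) : Fin n → E2 := fun j => sg θ w (ω j)

lemma Gp_meas (n : ℕ) (w θ : ℝ) : MeasurableSet (Gp n w θ) :=
  GG_meas (fun a => (rfl2 θ).continuous.measurable (sP_meas w a))
    ((rfl2 θ).continuous.measurable (Out_meas w))
lemma Gm_meas (n : ℕ) (w θ : ℝ) : MeasurableSet (Gm n w θ) :=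
  GG_meas (fun a => (rfl2 θ).continuous.measurable (sM_meas w a))
    ((rfl2 θ).continuous.measurable (Out_meas w))
lemma TT_mp (β : ℝ) (n : ℕ) (w θ : ℝ) : MeasurePreserving (TT n w θ) (betaPi β n) (betaPi β n) :=
  measurePreserving_pi _ _ fun _ => sg_mp β θ w
lemma TT_Gp {n : ℕ} {w θ : ℝ} (hw : 0 < w) (hw1 : w ≤ 1/100) (ω : Fin n → E2) :
    TT n w θ ω ∈ Gp n w θ ↔ ω ∈ Gm n w θ := GG_pre (sg_P hw) (sg_Out hw hw1) ω
lemma TT_Gm {n : ℕ} {w θ : ℝ} (hw : 0 < w) (hw1 : w ≤ 1/100) (ω : Fin n → E2) :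
    TT n w θ ω ∈ Gm n w θ ↔ ω ∈ Gp n w θ := GG_pre (sg_M hw) (sg_Out hw hw1) ω
lemma TT_Gp' {n : ℕ} {w θ φ : ℝ} (hw : 0 < w) (hw1 : w ≤ 1/100) (h1 : 50 * w ≤ |θ - φ|)
    (h2 : |θ - φ| ≤ 1) (ω : Fin n → E2) :
    TT n w θ ω ∈ Gp n w φ ↔ ω ∈ Gp n w φ :=
  GG_pre (fun a q => (sg_k hw hw1 h1 h2 q).1 a) (fun q => (sg_k hw hw1 h1 h2 q).2.2) ω
lemma TT_Gm' {n : ℕ} {w θ φ : ℝ} (hw : 0 < w) (hw1 : w ≤ 1/100) (h1 : 50 * w ≤ |θ - φ|)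
    (h2 : |θ - φ| ≤ 1) (ω : Fin n → E2) :
    TT n w θ ω ∈ Gm n w φ ↔ ω ∈ Gm n w φ :=
  GG_pre (fun a q => (sg_k hw hw1 h1 h2 q).2.1 a) (fun q => (sg_k hw hw1 h1 h2 q).2.2) ω

lemma vc_P {n : ℕ} {w θ : ℝ} (hw : 0 < w) (hw1 : w ≤ 1/100) {ω : Fin n → E2}
    (h : ω ∈ Gp n w θ) : vertCount ω = vertCount (TT n w θ ω) + 1 := by
  obtain ⟨e, he⟩ := mem_GG.1 h
  have := vc_diff0 (ω := fun j => rfl2 θ (ω j)) (e := e) hw hw1 he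
  rw [vertCount_comp] at this
  rw [this]
  congr 1
  exact (vertCount_comp (rfl2 θ) (fun j => sig0 w (rfl2 θ (ω j)))).symm

lemma vc_M {n : ℕ} {w θ : ℝ} (hw : 0 < w) (hw1 : w ≤ 1/100) {ω : Fin n → E2}
    (h : ω ∈ Gm n w θ) : vertCount (TT n w θ ω) = vertCount ω + 1 := by
  have h1 := vc_P hw hw1 ((TT_Gp hw hw1 ω).2 h)
  have h2 : TT n w θ (TT n w θ ω) = ω := by
    funext j; exact sg_invol θ w (ω j)
  rwa [h2] at h1

lemma GpGm_disj {n : ℕ} {w θ : ℝ} (hw : 0 < w) (hw1 : w ≤ 1/100) {ω : Fin n → E2}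
    (h : ω ∈ Gp n w θ) : ω ∉ Gm n w θ := by
  intro h'
  obtain ⟨e, he⟩ := mem_GG.1 h
  obtain ⟨e', he'⟩ := mem_GG.1 h'
  have hd := cells_disj hw (q := rfl2 θ (ω (e 3)))
  have f3 : rfl2 θ (ω (e 3)) ∈ cP w := he.1 3
  by_cases hr : e 3 ∈ Set.range e'
  · obtain ⟨b, hb⟩ := hr
    have := he'.1 b
    rw [hb] at this
    fin_cases b <;> simp [sM] at this <;> tauto
  · exact cap_out (sP_cap (a := 3) hw hw1 f3) (he'.2 _ hr)

lemma Gp_mass {β w θ : ℝ} (hw : 0 < w) (hw1 : w ≤ 1/100) (n : ℕ)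
    {c o : ENNReal} (hc : ∀ a, c ≤ betaMeasure β (sP w a)) (ho : o ≤ betaMeasure β (Out w)) (ho1 : o ≤ 1) :
    (n.descFactorial 4 : ENNReal) * (c^4 * o^n) ≤ betaPi β n (Gp n w θ) := by
  refine GG_mass (betaMeasure β) (fun a => (rfl2 θ).continuous.measurable (sP_meas w a))
    ((rfl2 θ).continuous.measurable (Out_meas w)) (fun a b q => sP_disj hw a b _)
    (fun a q h => cap_out (sP_cap hw hw1 h)) (fun a => ?_) ?_ ho1
  · rw [(beta_inv β (rfl2 θ)).measure_preimage (sP_meas w a).nullMeasurableSet]; exact hc a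
  · rw [(beta_inv β (rfl2 θ)).measure_preimage (Out_meas w).nullMeasurableSet]; exact ho


lemma abs_var {Ω : Type*} [MeasurableSpace Ω] (μ : Measure Ω) [IsProbabilityMeasure μ]
    {m : ℕ} {f : Ω → ℝ} {K : ℝ} (hf : Measurable f) (hK : ∀ x, |f x| ≤ K)
    (s : Fin m → Ω → ℝ) (hs : ∀ i, Measurable (s i)) (hs1 : ∀ i x, |s i x| ≤ 1)
    (T : Fin m → Ω → Ω) (hT : ∀ i, MeasurePreserving (T i) μ μ)
    (h1 : ∀ i x, s i (T i x) = - s i x) (h2 : ∀ i k x, i ≠ k → s k (T i x) = s k x)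
    (h3 : ∀ i x, f x * s i x - f (T i x) * s i x = (s i x)^2) {p : ℝ}
    (hp : ∀ i, p ≤ ∫ x, (s i x)^2 ∂μ) :
    (1/4) * (m * p) ≤ ∫ x, f x ^2 ∂μ - (∫ x, f x ∂μ)^2 := by
  have ib : ∀ {g : Ω → ℝ} {C : ℝ}, Measurable g → (∀ x, |g x| ≤ C) → Integrable g μ :=
    fun hg hC => Integrable.of_bound hg.aestronglyMeasurable _ (Filter.Eventually.of_forall hC)
  have bm : ∀ {a b A B : ℝ}, |a| ≤ A → |b| ≤ B → |a * b| ≤ A * B := by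
    intro a b A B ha hb
    rw [abs_mul]
    exact mul_le_mul ha hb (abs_nonneg _) ((abs_nonneg _).trans ha)
  have inv : ∀ i {g : Ω → ℝ}, Measurable g → ∫ x, g (T i x) ∂μ = ∫ x, g x ∂μ := by
    intro i g hg
    rw [← integral_map (hT i).measurable.aemeasurable hg.aestronglyMeasurable, (hT i).map_eq]
  have e1 : ∀ i, ∫ x, s i x ∂μ = 0 := by
    intro i
    have := inv i (hs i)
    simp only [h1, integral_neg] at this
    linarith
  have e2 : ∀ i k, i ≠ k → ∫ x, s i x * s k x ∂μ = 0 := by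
    intro i k hik
    have := inv i ((hs i).mul (hs k))
    simp only [Pi.mul_apply, h1, h2 i k _ hik, neg_mul, integral_neg] at this
    linarith
  have ifs : ∀ i, Integrable (fun x => f x * s i x) μ := fun i =>
    ib (hf.mul (hs i)) (fun x => bm (hK x) (hs1 i x))
  have iss : ∀ i k, Integrable (fun x => s i x * s k x) μ := fun i k =>
    ib ((hs i).mul (hs k)) (fun x => bm (hs1 i x) (hs1 k x))
  have e3 : ∀ i, ∫ x, f x * s i x ∂μ = (1/2) * ∫ x, s i x * s i x ∂μ := by
    intro i
    have a1 := inv i (hf.mul (hs i))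
    simp only [Pi.mul_apply, h1, mul_neg, integral_neg] at a1
    have a2 : ∫ x, (f x * s i x - f (T i x) * s i x) ∂μ = ∫ x, s i x * s i x ∂μ := by
      congr 1; funext x; rw [h3]; ring
    have a3 : Integrable (fun x => f (T i x) * s i x) μ :=
      ib ((hf.comp (hT i).measurable).mul (hs i)) (fun x => bm (hK _) (hs1 i x))
    rw [integral_sub (ifs i) a3] at a2
    linarith
  set M := ∫ x, f x ∂μ with hM
  have iS : Integrable (fun x => ∑ i, s i x) μ := integrable_finsetSum _ fun i _ => ib (hs i) (hs1 i)
  have ifS : Integrable (fun x => ∑ i, f x * s i x) μ := integrable_finsetSum _ fun i _ => ifs i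
  have iSS : Integrable (fun x => ∑ i, ∑ k, s i x * s k x) μ :=
    integrable_finsetSum _ fun i _ => integrable_finsetSum _ fun k _ => iss i k
  have iff2 : Integrable (fun x => f x ^2) μ := by
    simp only [sq]; exact ib (hf.mul hf) (fun x => bm (hK x) (hK x))
  have iF : Integrable f μ := ib hf hK
  have eS : ∫ x, ∑ i, s i x ∂μ = 0 := by
    rw [integral_finsetSum _ fun i _ => ib (hs i) (hs1 i)]; simp [e1]
  have efS : ∫ x, ∑ i, f x * s i x ∂μ = (1/2) * ∑ i, ∫ x, s i x * s i x ∂μ := by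
    rw [integral_finsetSum _ fun i _ => ifs i, Finset.mul_sum]; simp only [e3]
  have eSS : ∫ x, ∑ i, ∑ k, s i x * s k x ∂μ = ∑ i, ∫ x, s i x * s i x ∂μ := by
    rw [integral_finsetSum _ fun i _ => integrable_finsetSum _ fun k _ => iss i k]
    refine Finset.sum_congr rfl fun i _ => ?_
    rw [integral_finsetSum _ fun k _ => iss i k, Finset.sum_eq_single i]
    · intro k _ hk; exact e2 i k hk.symm
    · simp
  have tot : 0 ≤ ∫ x, (f x - M - (1/2) * ∑ i, s i x)^2 ∂μ := integral_nonneg fun x => sq_nonneg _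
  have ex : ∀ x, (f x - M - (1/2) * ∑ i, s i x)^2 =
      f x ^2 - 2 * M * f x + M^2 - ∑ i, f x * s i x + M * ∑ i, s i x
        + (1/4) * ∑ i, ∑ k, s i x * s k x := by
    intro x
    rw [← Finset.mul_sum, ← Finset.sum_mul_sum]; ring
  simp only [ex] at tot
  have j1 := iff2.sub (iF.const_mul (2*M))
  have j2 := j1.add (integrable_const (M^2))
  have j3 := j2.sub ifS
  have j4 := j3.add (iS.const_mul M)
  have h := integral_add j4 (iSS.const_mul (1/4))
  have k4 := integral_add j3 (iS.const_mul M)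
  have k3 := integral_sub j2 ifS
  have k2 := integral_add j1 (integrable_const (M^2))
  have k1 := integral_sub iff2 (iF.const_mul (2*M))
  simp only [Pi.add_apply, Pi.sub_apply, integral_const_mul, integral_const, eS, efS, eSS,
    probReal_univ, smul_eq_mul, one_mul] at h k4 k3 k2 k1
  rw [h, k4, k3, k2, k1, ← hM] at tot
  have hsum : (m:ℝ) * p ≤ ∑ i, ∫ x, s i x * s i x ∂μ := by
    calc (m:ℝ) * p = ∑ _i : Fin m, p := by simp
      _ ≤ _ := Finset.sum_le_sum fun i _ => by simpa only [sq] using hp i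
  nlinarith


noncomputable def ss (n : ℕ) (w θ : ℝ) (ω : Fin n → E2) : ℝ :=
  (Gp n w θ).indicator (fun _ => (1:ℝ)) ω - (Gm n w θ).indicator (fun _ => (1:ℝ)) ω

lemma var_low {β w : ℝ} (hβ : 0 ≤ β) (hw : 0 < w) (hw1 : w ≤ 1/100) (n m : ℕ)
    (hm : 50 * w * m ≤ 1) {p : ℝ} (hp : ∀ θ, ENNReal.ofReal p ≤ betaPi β n (Gp n w θ)) :
    (1/4) * (m * p) ≤ varF0 β n := by
  classical
  have := beta_prob hβ
  have : IsProbabilityMeasure (betaPi β n) := by unfold betaPi; infer_instance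
  have hsq : ∀ θ ω, (ss n w θ ω)^2 = (Gp n w θ ∪ Gm n w θ).indicator (fun _ => (1:ℝ)) ω := by
    intro θ ω
    have hd := GpGm_disj (θ := θ) (ω := ω) hw hw1
    by_cases h1 : ω ∈ Gp n w θ
    · simp [ss, h1, hd h1]
    · by_cases h2 : ω ∈ Gm n w θ <;> simp [ss, h1, h2]
  have hsep : ∀ i k : Fin m, i ≠ k → 50 * w ≤ |50 * w * (i:ℕ) - 50 * w * (k:ℕ)| ∧
      |50 * w * ((i:ℕ):ℝ) - 50 * w * (k:ℕ)| ≤ 1 := by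
    intro i k hik
    rw [← mul_sub, abs_mul, abs_of_pos (by positivity : 0 < 50 * w)]
    have hz : (1:ℝ) ≤ |((i:ℕ):ℝ) - (k:ℕ)| := by
      have : (i:ℕ) ≠ (k:ℕ) := fun h => hik (Fin.ext h)
      have h1 : (1:ℤ) ≤ |((i:ℕ):ℤ) - (k:ℕ)| := Int.one_le_abs (by omega)
      exact_mod_cast h1
    have hz2 : |((i:ℕ):ℝ) - (k:ℕ)| ≤ m := by
      have h1 : ((i:ℕ):ℝ) ≤ m := by exact_mod_cast i.2.le
      have h2 : ((k:ℕ):ℝ) ≤ m := by exact_mod_cast k.2.le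
      have h3 : (0:ℝ) ≤ (i:ℕ) := Nat.cast_nonneg _
      have h4 : (0:ℝ) ≤ (k:ℕ) := Nat.cast_nonneg _
      rw [abs_le]; constructor <;> linarith
    have h0 : 0 < 50 * w := by positivity
    constructor
    · nlinarith
    · nlinarith
  refine abs_var (betaPi β n) (K := n) (vertCount_meas n) (fun x => ?_)
    (fun i => ss n w (50 * w * (i:ℕ))) (fun i => ?_) (fun i x => ?_)
    (fun i => TT n w (50 * w * (i:ℕ))) (fun i => TT_mp β n w _) (fun i x => ?_)
    (fun i k x hik => ?_) (fun i x => ?_) (fun i => ?_)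
  · rw [abs_of_nonneg (by unfold vertCount; positivity)]
    exact vertCount_le x
  · exact (measurable_const.indicator (Gp_meas ..)).sub (measurable_const.indicator (Gm_meas ..))
  · rw [← sq_le_one_iff_abs_le_one, hsq]
    exact Set.indicator_le_self' (fun _ _ => zero_le_one) x
  · simp only [ss, Set.indicator_apply, TT_Gp hw hw1, TT_Gm hw hw1]; ring
  · obtain ⟨h1, h2⟩ := hsep i k hik
    simp only [ss, Set.indicator_apply, TT_Gp' hw hw1 h1 h2, TT_Gm' hw hw1 h1 h2]
  · have hd := GpGm_disj (θ := 50 * w * (i:ℕ)) (ω := x) hw hw1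
    by_cases h1 : x ∈ Gp n w (50 * w * (i:ℕ))
    · have := vc_P hw hw1 h1
      simp [ss, h1, hd h1]
      linarith
    · by_cases h2 : x ∈ Gm n w (50 * w * (i:ℕ))
      · have := vc_M hw hw1 h2
        simp [ss, h1, h2]
        linarith
      · simp [ss, h1, h2]
  · simp only [hsq]
    rw [integral_indicator_const _ ((Gp_meas ..).union (Gm_meas ..)), smul_eq_mul, mul_one]
    have h1 : ENNReal.ofReal p ≤ betaPi β n (Gp n w (50 * w * (i:ℕ)) ∪ Gm n w (50 * w * (i:ℕ))) :=
      (hp _).trans (measure_mono Set.subset_union_left)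
    exact (ENNReal.ofReal_le_iff_le_toReal (measure_ne_top _ _)).1 h1

lemma Gp_low {β : ℝ} (hβ : 0 ≤ β) : ∃ p : ℝ, 0 < p ∧ ∃ N : ℕ, ∀ n : ℕ, N ≤ n → ∀ w : ℝ, 0 < w →
    w ≤ 1/100 → w^(2*β+3) = 1/n → ∀ θ, ENNReal.ofReal p ≤ betaPi β n (Gp n w θ) := by
  have := beta_prob hβ
  set c1 := (β+1)/Real.pi*(1/20)^β*(1/200) with hc1
  set C2 := (β+1)/Real.pi*200^β*3000 with hC2
  have hc1p : 0 < c1 := by positivity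
  have hC2p : 0 < C2 := by positivity
  have hlim := Real.tendsto_one_add_div_pow_exp (-C2)
  have hev := hlim.eventually_const_lt (show Real.exp (-C2) / 2 < Real.exp (-C2) by
    linarith [Real.exp_pos (-C2)])
  obtain ⟨N1, hN1⟩ := Filter.eventually_atTop.1 hev
  obtain ⟨N2, hN2⟩ := exists_nat_ge C2
  refine ⟨(c1/2)^4 * (Real.exp (-C2)/2), by positivity, N1 + N2 + 6, fun n hn w hw hw1 hwn θ => ?_⟩
  have hn6 : (6:ℝ) ≤ n := by exact_mod_cast (show 6 ≤ n by omega)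
  have hn2 : C2 ≤ n := hN2.trans (by exact_mod_cast (show N2 ≤ n by omega))
  have hn0 : (0:ℝ) < n := by linarith
  have ho0 : 0 ≤ 1 - C2 * (1/n) := by
    rw [mul_one_div, sub_nonneg, div_le_one hn0]; exact hn2
  have hout : ENNReal.ofReal (1 - C2 * (1/n)) ≤ betaMeasure β (Out w) := by
    have h := Out_compl_mass hβ hw hw1
    rw [hwn, ← hC2] at h
    rw [ENNReal.ofReal_sub _ (by positivity), ENNReal.ofReal_one, tsub_le_iff_right,
      ← prob_add_prob_compl (μ := betaMeasure β) (Out_meas w)]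
    gcongr
  have hcell : ∀ a, ENNReal.ofReal (c1 * (1/n)) ≤ betaMeasure β (sP w a) := by
    intro a
    rw [hc1, ← hwn]
    fin_cases a
    · exact box_mass hβ (by norm_num) (by norm_num) hw (by norm_num) (fun q h => (cL_n hw hw1 h).2)
    · exact box_mass hβ (by norm_num) (by norm_num) hw (by norm_num) (fun q h => (cR_n hw hw1 h).2)
    · exact box_mass hβ (by norm_num) (by norm_num) hw (by norm_num) (fun q h => (cC_n hw hw1 h).2)
    · exact box_mass hβ (by norm_num) (by norm_num) hw (by norm_num) (fun q h => (cP_n hw hw1 h).2)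
  refine le_trans ?_ (Gp_mass hw hw1 n hcell hout ?_)
  · rw [← ENNReal.ofReal_pow (by positivity), ← ENNReal.ofReal_pow ho0,
      ← ENNReal.ofReal_mul (by positivity), ← ENNReal.ofReal_natCast,
      ← ENNReal.ofReal_mul (by positivity)]
    apply ENNReal.ofReal_le_ofReal
    have hN := hN1 n (by omega)
    have e : 1 - C2 * (1/n) = 1 + -C2 / (n:ℝ) := by ring
    rw [e]
    have hdf : ((n:ℝ)/2)^4 ≤ (n.descFactorial 4 : ℝ) := by
      have h := Nat.pow_sub_le_descFactorial n 4
      have h' : (((n + 1 - 4 : ℕ)):ℝ)^4 ≤ (n.descFactorial 4 : ℝ) := by exact_mod_cast h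
      refine le_trans ?_ h'
      have h2 : ((n + 1 - 4 : ℕ):ℝ) = (n:ℝ) - 3 := by
        rw [show n + 1 - 4 = n - 3 by omega, Nat.cast_sub (by omega)]; norm_num
      rw [h2]
      gcongr
      linarith
    calc (c1/2)^4 * (Real.exp (-C2)/2) = ((n:ℝ)/2)^4 * ((c1 * (1/n))^4 * (Real.exp (-C2)/2)) := by
          field_simp
      _ ≤ _ := by gcongr
  · rw [← ENNReal.ofReal_one]
    apply ENNReal.ofReal_le_ofReal
    have : 0 ≤ C2 * (1/(n:ℝ)) := by positivity
    linarith

theorem variance_vertex_count_lower (d : ℕ) (hd : 4 ≤ d)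
    (β : ℝ) (hβ : β = (d : ℝ) / 2 - 2) :
    ∀ a : ℝ, 0 < a → ∃ c : ℝ, 0 < c ∧ ∃ N : ℕ, ∀ n : ℕ, N ≤ n →
      c * (n : ℝ) ^ (1 / ((d : ℝ) - 1) - a) ≤ varF0 β n := by
  intro a ha
  have hd' : (4:ℝ) ≤ d := by exact_mod_cast hd
  have hβ0 : 0 ≤ β := by rw [hβ]; linarith
  obtain ⟨p, hp, N, hN⟩ := Gp_low hβ0
  set t : ℝ := 1 / ((d:ℝ) - 1) with ht
  have htp : 0 < t := by rw [ht]; apply one_div_pos.2; linarith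
  have hlim := (tendsto_rpow_neg_atTop htp).comp (tendsto_natCast_atTop_atTop (R := ℝ))
  obtain ⟨N1, hN1⟩ := Filter.eventually_atTop.1
    (hlim.eventually_le_const (show (0:ℝ) < 1/100 by norm_num))
  refine ⟨p/400, by positivity, N + N1 + 1, fun n hn => ?_⟩
  have hn1 : (1:ℝ) ≤ n := by exact_mod_cast (show 1 ≤ n by omega)
  have hn0 : (0:ℝ) < n := by linarith
  set w := (n:ℝ)^(-t) with hwd
  have hw : 0 < w := by positivity
  have hw1 : w ≤ 1/100 := hN1 n (by omega)
  have hwn : w^(2*β+3) = 1/n := by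
    rw [hwd, ← Real.rpow_mul hn0.le, show -t * (2*β+3) = -1 by
      rw [hβ, ht]
      have : (d:ℝ) - 1 ≠ 0 := by linarith
      field_simp; ring, Real.rpow_neg_one, one_div]
  have hf := Nat.floor_le (show 0 ≤ 1/(50*w) by positivity)
  have hf2 := Nat.lt_floor_add_one (1/(50*w))
  have hv := var_low hβ0 hw hw1 n ⌊1/(50*w)⌋₊ (by
    rw [le_div_iff₀ (by positivity)] at hf; linarith) (hN n (by omega) w hw hw1 hwn)
  have hwi : 1/w = (n:ℝ)^t := by
    rw [hwd, Real.rpow_neg hn0.le, one_div, inv_inv]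
  have h100 : 100 ≤ 1/w := by
    rw [le_div_iff₀ hw]; linarith
  have he : 1/(50*w) = (1/w)/50 := by field_simp
  rw [he] at hf2 hv
  rw [hwi] at hf2 hv h100
  have hfl : (n:ℝ)^t/100 ≤ (⌊(n:ℝ)^t/50⌋₊ : ℝ) := by linarith
  have hmono : (n:ℝ)^(t - a) ≤ (n:ℝ)^t := Real.rpow_le_rpow_of_exponent_le hn1 (by linarith)
  calc p/400 * (n:ℝ)^(t-a) ≤ p/400 * (n:ℝ)^t := by gcongr
    _ ≤ (1/4) * ((⌊(n:ℝ)^t/50⌋₊ : ℝ) * p) := by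
      have := mul_le_mul_of_nonneg_right hfl hp.le
      linarith
    _ ≤ _ := hv
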